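/- arXiv:nlin/0611021 — 2 statements merged into one kernel-verified Lean document; each statement's English description precedes it below -/
import Mathlib

section
/- Let α ∈ (0.5, 0.95) and k̂ = (0,−1), so |k̂+np|² = n² + α². There exists a unique ε_*(α) > 0 satisfying √(32 − 3α⁶ − 17α⁴ − 16α²)/(2(α²+1)(α²+4)) < ε_*(α) < (1/(α²+1))·√((1−α²)/2) (where the quantity under the left square root is positive for α ∈ (0.5,0.95) and the left bound is less than the right bound) such that: (i) for ε > ε_*(α) the line-k̂ spectral problem has no eigenvalue with nonnegative real part; (ii) for ε = ε_*(α), λ = 0 is an eigenvalue and every other eigenvalue has negative real part; (iii) for 0 < ε < ε_*(α) there is a unique positive eigenvalue λ(ε) > 0 and every other eigenvalue has negative real part. -/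
/-- The interaction coefficient
`A(q,r) = (α/2)·[1/(r₁²+(αr₂)²) − 1/(q₁²+(αq₂)²)]·(q₁r₂ − q₂r₁)`. -/
noncomputable def coefA (α : ℝ) (q r : ℤ × ℤ) : ℝ :=
  (α / 2) * (1 / ((r.1 : ℝ) ^ 2 + (α * (r.2 : ℝ)) ^ 2)
      - 1 / ((q.1 : ℝ) ^ 2 + (α * (q.2 : ℝ)) ^ 2)) *
    ((q.1 : ℝ) * (r.2 : ℝ) - (q.2 : ℝ) * (r.1 : ℝ))

/-- The line-`k̂` spectral problem for the linearized 2D Navier–Stokes operator at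
the shear `Ω = 2 cos x₁`. -/
def LineEqn (α ε : ℝ) (k : ℤ × ℤ) (lam : ℂ) (ω : ℤ → ℂ) : Prop :=
  ∀ n : ℤ,
    (↑(coefA α (1, 0) (k.1 + (n - 1), k.2)) : ℂ) * ω (n - 1)
      - (↑(ε * (((k.1 : ℝ) + (n : ℝ)) ^ 2 + (α * (k.2 : ℝ)) ^ 2)) : ℂ) * ω n
      - (↑(coefA α (1, 0) (k.1 + (n + 1), k.2)) : ℂ) * ω (n + 1)
    = lam * ω n

/-- `lam` is an eigenvalue of the line-`k̂` problem: there is a nonzero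
square-summable solution. -/
def IsLineEig (α ε : ℝ) (k : ℤ × ℤ) (lam : ℂ) : Prop :=
  ∃ ω : ℤ → ℂ, Memℓp ω 2 ∧ ω ≠ 0 ∧ LineEqn α ε k lam ω

/-!
In the unknown `Z n = A n * ω n` the line problem is `Z (n - 1) = c n * Z n + Z (n + 1)` with
`c n = (λ + ε (n ^ 2 + α ^ 2)) / A n`, and `c` is even. Adding its alternating reflection to a
decaying solution reduces the problem to the half-line `n ≥ 0`, where `A n > 0` for `n ≥ 1` and the
decaying solution is unique up to scaling, together with one matching condition
`(λ + ε α ^ 2) * Z 0 = -2 * A 0 * Z 1` at `0`.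

If `0 ≤ Re λ`, summing the real part of the recursion against a suitable multiple of
`conj (Z (n + 1))` over pairs of steps contradicts the matching condition unless `λ` is real. For
real `λ = μ ≥ 0` the same summation, applied to a Casoratian of two decaying solutions, shows that
the defect in the matching condition increases strictly with `μ`, and also from `(ε, 0)` to
`(ε', μ)` when `ε < ε'`. This gives uniqueness of `ε_*` and of the nonnegative eigenvalue, and the
stability claims.

The ratio `Z 0 / Z 1` is the continued fraction `[c 1; c 2, c 3, …]`, a fixed point of a map two
steps of which form a uniform contraction; hence it depends continuously on `ε` and `μ`, and the
intermediate value theorem solves the matching condition. At `μ = 0`, the truncations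
`c 1 < [c 1; c 2, c 3, …] < c 1 + 1 / c 2` put the solution strictly between the two stated bounds.
-/

open Filter Topology
open scoped ComplexConjugate NNReal BoundedContinuousFunction

section Recursion

variable {𝕜 : Type*} [RCLike 𝕜] {c z : ℕ → 𝕜}

/-- A decaying solution of the three-term recursion `z n = c (n + 1) * z (n + 1) + z (n + 2)` on the
half-line, for which `z 0 / z 1` is the continued fraction `[c 1; c 2, c 3, …]`. The entry `c 0`
takes no part: it is kept so that the two-sided recursion restricts to the half-line without
reindexing. -/
structure IsRecessive (c z : ℕ → 𝕜) : Prop where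
  step : ∀ n, z n = c (n + 1) * z (n + 1) + z (n + 2)
  tendsto_zero : Tendsto z atTop (𝓝 0)

namespace IsRecessive

lemma shift (hz : IsRecessive c z) (m : ℕ) :
    IsRecessive (fun n => c (n + m)) fun n => z (n + m) where
  step n := by simpa only [add_right_comm _ _ m] using hz.step (n + m)
  tendsto_zero := (tendsto_add_atTop_iff_nat m).2 hz.tendsto_zero

lemma re_mul_conj_eq (hz : IsRecessive c z) (e : 𝕜) (n : ℕ) :
    RCLike.re (e * (z n * conj (z (n + 1))))
      = RCLike.re (e * c (n + 1)) * ‖z (n + 1)‖ ^ 2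
        + RCLike.re (e * conj (c (n + 2))) * ‖z (n + 2)‖ ^ 2
        + RCLike.re (e * (z (n + 2) * conj (z (n + 3)))) := by
  have h1 := hz.step n
  have h2 := congrArg conj (hz.step (n + 1))
  simp only [map_add, map_mul] at h2
  have hsplit : e * (z n * conj (z (n + 1)))
      = (‖z (n + 1)‖ ^ 2 : ℝ) * (e * c (n + 1))
        + (‖z (n + 2)‖ ^ 2 : ℝ) * (e * conj (c (n + 2)))
        + e * (z (n + 2) * conj (z (n + 3))) := by
    push_cast
    rw [← RCLike.mul_conj, ← RCLike.mul_conj]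
    linear_combination e * conj (z (n + 1)) * h1 + e * z (n + 2) * h2
  have h := congrArg RCLike.re hsplit
  simp only [map_add, RCLike.re_ofReal_mul] at h
  linarith

lemma re_mul_conj_pos (hz : IsRecessive c z) {e : 𝕜}
    (hodd : ∀ k, 0 < RCLike.re (e * c (2 * k + 1)))
    (heven : ∀ k, 0 ≤ RCLike.re (e * conj (c (2 * k + 2)))) (h1 : z 1 ≠ 0) :
    0 < RCLike.re (e * (z 0 * conj (z 1))) := by
  let g : ℕ → ℝ := fun k => RCLike.re (e * (z (2 * k) * conj (z (2 * k + 1))))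
  have hstep : ∀ k, g k = RCLike.re (e * c (2 * k + 1)) * ‖z (2 * k + 1)‖ ^ 2
      + RCLike.re (e * conj (c (2 * k + 2))) * ‖z (2 * k + 2)‖ ^ 2 + g (k + 1) :=
    fun k => hz.re_mul_conj_eq e (2 * k)
  have hanti : Antitone g := antitone_nat_of_succ_le fun k => by
    have := mul_nonneg (hodd k).le (sq_nonneg ‖z (2 * k + 1)‖)
    have := mul_nonneg (heven k) (sq_nonneg ‖z (2 * k + 2)‖)
    linarith [hstep k]
  have hlim : Tendsto g atTop (𝓝 0) := by
    have hdouble : Tendsto (fun k : ℕ => 2 * k) atTop atTop :=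
      tendsto_id.const_mul_atTop' two_pos
    have hprod := hz.tendsto_zero.mul (hz.shift 1).tendsto_zero.star
    simpa [g, Function.comp_def] using
      (RCLike.continuous_re.tendsto _).comp ((hprod.comp hdouble).const_mul e)
  have hg1 : 0 ≤ g 1 := hanti.le_of_tendsto hlim 1
  have := mul_pos (hodd 0) (pow_pos (norm_pos_iff.2 h1) 2)
  have := mul_nonneg (heven 0) (sq_nonneg ‖z 2‖)
  have := hstep 0
  simp only [g, mul_zero, zero_add] at *
  linarith

lemma re_mul_conj_succ_pos (hz : IsRecessive c z) (hc : ∀ n, 0 < RCLike.re (c (n + 1))) {n : ℕ}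
    (hn : z (n + 1) ≠ 0) : 0 < RCLike.re (z n * conj (z (n + 1))) := by
  have h := (hz.shift n).re_mul_conj_pos (e := 1) (fun k => by simpa [add_right_comm] using hc _)
    (fun k => by simpa [add_right_comm] using (hc _).le) (by simpa [add_comm] using hn)
  simpa [add_comm] using h

lemma succ_ne_zero (hz : IsRecessive c z) (hc : ∀ n, 0 < RCLike.re (c (n + 1))) {n : ℕ}
    (hn : z n ≠ 0) : z (n + 1) ≠ 0 := by
  intro h
  have hn2 : z (n + 2) ≠ 0 := by
    have := hz.step n
    rw [h, mul_zero, zero_add] at this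
    rwa [← this]
  simpa [h] using hz.re_mul_conj_succ_pos hc hn2

lemma eq_zero (hz : IsRecessive c z) (hc : ∀ n, 0 < RCLike.re (c (n + 1))) (h0 : z 0 = 0) (n : ℕ) :
    z n = 0 := by
  induction n with
  | zero => exact h0
  | succ n ih =>
    by_contra h
    simpa [ih] using hz.re_mul_conj_succ_pos hc h

lemma const_mul (hz : IsRecessive c z) (k : 𝕜) : IsRecessive c fun n => k * z n where
  step n := by linear_combination k * hz.step n
  tendsto_zero := by simpa using hz.tendsto_zero.const_mul k

lemma re {c : ℕ → ℝ} {z : ℕ → ℂ} (hz : IsRecessive (fun n => (c n : ℂ)) z) :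
    IsRecessive c fun n => (z n).re where
  step n := by simpa using congrArg Complex.re (hz.step n)
  tendsto_zero := by
    simpa [Function.comp_def] using (Complex.continuous_re.tendsto 0).comp hz.tendsto_zero

lemma pos {c z : ℕ → ℝ} (hz : IsRecessive c z) (hc : ∀ n, 0 < c (n + 1)) (h0 : 0 < z 0) (n : ℕ) :
    0 < z n := by
  induction n with
  | zero => exact h0
  | succ n ih =>
    have h := hz.re_mul_conj_succ_pos hc (hz.succ_ne_zero hc ih.ne')
    simp only [conj_trivial, RCLike.re_to_real] at h
    exact pos_of_mul_pos_right h ih.le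

lemma mul_lt_mul_of_coeff {c z c' z' : ℕ → ℝ} (hz : IsRecessive c z) (hz' : IsRecessive c' z')
    (hpos : ∀ n, 0 < z n) (hpos' : ∀ n, 0 < z' n) {e e' : ℝ}
    (hodd : ∀ k, e * c (2 * k + 1) < e' * c' (2 * k + 1))
    (heven : ∀ k, e * c' (2 * k + 2) ≤ e' * c (2 * k + 2)) :
    e * (z 0 * z' 1) < e' * (z' 0 * z 1) := by
  let g : ℕ → ℝ := fun k =>
    e * (z (2 * k) * z' (2 * k + 1)) - e' * (z' (2 * k) * z (2 * k + 1))
  have hstep : ∀ k, g k < g (k + 1) := by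
    intro k
    have h1 : z (2 * k) = c (2 * k + 1) * z (2 * k + 1) + z (2 * k + 2) := hz.step (2 * k)
    have h2 : z (2 * k + 1) = c (2 * k + 2) * z (2 * k + 2) + z (2 * k + 3) := hz.step (2 * k + 1)
    have h1' : z' (2 * k) = c' (2 * k + 1) * z' (2 * k + 1) + z' (2 * k + 2) := hz'.step (2 * k)
    have h2' : z' (2 * k + 1) = c' (2 * k + 2) * z' (2 * k + 2) + z' (2 * k + 3) :=
      hz'.step (2 * k + 1)
    have hodd' := mul_lt_mul_of_pos_right (hodd k)
      (mul_pos (hpos (2 * k + 1)) (hpos' (2 * k + 1)))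
    have heven' := mul_le_mul_of_nonneg_right (heven k)
      (mul_pos (hpos (2 * k + 2)) (hpos' (2 * k + 2))).le
    have hsplit : g k = g (k + 1)
        + (e * c (2 * k + 1) - e' * c' (2 * k + 1)) * (z (2 * k + 1) * z' (2 * k + 1))
        + (e * c' (2 * k + 2) - e' * c (2 * k + 2)) * (z (2 * k + 2) * z' (2 * k + 2)) := by
      simp only [g, mul_add, mul_one]
      linear_combination e * z' (2 * k + 1) * h1 - e' * z (2 * k + 1) * h1'
        + e * z (2 * k + 2) * h2' - e' * z' (2 * k + 2) * h2
    linarith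
  have hlim : Tendsto g atTop (𝓝 0) := by
    have hdouble : Tendsto (fun k : ℕ => 2 * k) atTop atTop :=
      tendsto_id.const_mul_atTop' two_pos
    have hprod := (hz.tendsto_zero.mul (hz'.shift 1).tendsto_zero).const_mul e
    have hprod' := (hz'.tendsto_zero.mul (hz.shift 1).tendsto_zero).const_mul e'
    simpa [g, Function.comp_def] using (hprod.sub hprod').comp hdouble
  have hmono : StrictMono g := strictMono_nat_of_lt_succ hstep
  have : g 0 < 0 := (hstep 0).trans_le (hmono.monotone.ge_of_tendsto hlim 1)
  simpa [g, sub_neg] using this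

end IsRecessive

lemma summable_norm_sq_of_step {δ : ℝ} (hδ : 0 < δ) (hc : ∀ n, δ ≤ RCLike.re (c (n + 1)))
    (hstep : ∀ n, z n = c (n + 1) * z (n + 1) + z (n + 2))
    (hnonneg : ∀ n, 0 ≤ RCLike.re (z n * conj (z (n + 1)))) : Summable fun n => ‖z n‖ ^ 2 := by
  let E : ℕ → ℝ := fun n => RCLike.re (z n * conj (z (n + 1)))
  have hE : ∀ n, E n = RCLike.re (c (n + 1)) * ‖z (n + 1)‖ ^ 2 + E (n + 1) := by
    intro n
    have hsplit : z n * conj (z (n + 1))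
        = (‖z (n + 1)‖ ^ 2 : ℝ) * c (n + 1) + conj (z (n + 1) * conj (z (n + 2))) := by
      push_cast
      rw [← RCLike.mul_conj, map_mul, RCLike.conj_conj]
      linear_combination conj (z (n + 1)) * hstep n
    have := congrArg RCLike.re hsplit
    rwa [map_add, RCLike.re_ofReal_mul, RCLike.conj_re, mul_comm (‖z (n + 1)‖ ^ 2)] at this
  have hsum : ∀ N, δ * ∑ n ∈ Finset.range N, ‖z (n + 1)‖ ^ 2 ≤ E 0 - E N := by
    intro N
    induction N with
    | zero => simp
    | succ N ih =>
      rw [Finset.sum_range_succ, mul_add]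
      have := mul_le_mul_of_nonneg_right (hc N) (sq_nonneg ‖z (N + 1)‖)
      linarith [hE N]
  rw [← summable_nat_add_iff 1]
  refine summable_of_sum_range_le (c := E 0 / δ) (fun n => sq_nonneg _) fun N => ?_
  rw [le_div_iff₀' hδ]
  exact (hsum N).trans (sub_le_self _ (hnonneg N))

lemma IsRecessive.summable_norm_sq (hz : IsRecessive c z) {δ : ℝ} (hδ : 0 < δ)
    (hc : ∀ n, δ ≤ RCLike.re (c (n + 1))) : Summable fun n => ‖z n‖ ^ 2 := by
  refine summable_norm_sq_of_step hδ hc hz.step fun n => ?_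
  by_cases h : z (n + 1) = 0
  · simp [h]
  · exact (hz.re_mul_conj_succ_pos (fun n => hδ.trans_le (hc n)) h).le

lemma isRecessive_of_pos {c z : ℕ → ℝ} {δ : ℝ} (hδ : 0 < δ) (hc : ∀ n, δ ≤ c (n + 1))
    (hstep : ∀ n, z n = c (n + 1) * z (n + 1) + z (n + 2)) (hpos : ∀ n, 0 < z n) :
    IsRecessive c z where
  step := hstep
  tendsto_zero := by
    have hsum := summable_norm_sq_of_step (z := z) hδ hc hstep fun n => by
      simpa using (mul_pos (hpos n) (hpos (n + 1))).le
    simpa [Real.sqrt_sq (hpos _).le] using hsum.tendsto_atTop_zero.sqrt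

end Recursion

section ContinuedFraction

variable {Y : Type*} [TopologicalSpace Y] {δ : ℝ≥0}

/-- The map `ρ ↦ 1 / (d + ρ ∘ σ)`, whose fixed points are the continued fractions with partial
quotients `d y, d (σ y), d (σ (σ y)), …`. The shift `σ` is arbitrary so that the index of the
quotient and a parameter it depends on can be treated as a single point of `Y`. -/
noncomputable def continuedFractionMap (σ : C(Y, Y)) (d : C(Y, ℝ≥0)) (hδ : 0 < δ)
    (hd : ∀ y, δ ≤ d y) (ρ : Y →ᵇ ℝ≥0) : Y →ᵇ ℝ≥0 :=
  .mkOfBound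
    ⟨fun y => (d y + ρ (σ y))⁻¹, (d.continuous.add (ρ.continuous.comp σ.continuous)).inv₀
      fun y => (hδ.trans_le ((hd y).trans le_self_add)).ne'⟩
    δ⁻¹ fun x y => by
      have hle : ∀ y, (d y + ρ (σ y))⁻¹ ≤ δ⁻¹ := fun y =>
        inv_anti₀ hδ ((hd y).trans le_self_add)
      rw [NNReal.dist_eq]
      exact abs_sub_le_of_nonneg_of_le (by positivity) (by exact_mod_cast hle x) (by positivity)
        (by exact_mod_cast hle y)

-- A single step is only Lipschitz with constant `1 / δ ^ 2`; two steps always contract.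
lemma dist_inv_add_inv_le (hδ : 0 < δ) {a b : ℝ≥0} (ha : δ ≤ a) (hb : δ ≤ b) (s t : ℝ≥0) :
    dist (a + (b + s)⁻¹)⁻¹ (a + (b + t)⁻¹)⁻¹ ≤ (1 + δ ^ 2 : ℝ≥0)⁻¹ * dist s t := by
  have ha0 : 0 < (a : ℝ) := by exact_mod_cast hδ.trans_le ha
  have hb0 : 0 < (b : ℝ) := by exact_mod_cast hδ.trans_le hb
  have hsplit : ((a : ℝ) + ((b : ℝ) + s)⁻¹)⁻¹ - ((a : ℝ) + ((b : ℝ) + t)⁻¹)⁻¹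
      = (s - t) / ((a * (b + s) + 1) * (a * (b + t) + 1)) := by
    field_simp
    ring
  have hsq : (δ : ℝ) ^ 2 ≤ a * (b + s) := by
    rw [sq]
    exact_mod_cast mul_le_mul' ha (hb.trans le_self_add)
  have hdenom : (1 + δ ^ 2 : ℝ) ≤ (a * (b + s) + 1) * (a * (b + t) + 1) := by
    have : 0 ≤ (a : ℝ) * (b + t) := by positivity
    nlinarith
  simp only [NNReal.dist_eq]
  push_cast
  rw [hsplit, abs_div, abs_of_pos (lt_of_lt_of_le (by positivity) hdenom), div_eq_inv_mul]
  gcongr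

lemma contractingWith_continuedFractionMap (σ : C(Y, Y)) (d : C(Y, ℝ≥0)) (hδ : 0 < δ)
    (hd : ∀ y, δ ≤ d y) :
    ContractingWith (1 + δ ^ 2)⁻¹ (continuedFractionMap σ d hδ hd)^[2] := by
  refine ⟨inv_lt_one_of_one_lt₀ (lt_add_of_pos_right 1 (by positivity)),
    LipschitzWith.of_dist_le_mul fun f g => ?_⟩
  refine (BoundedContinuousFunction.dist_le (by positivity)).2 fun y => ?_
  refine (dist_inv_add_inv_le hδ (hd y) (hd (σ y)) (f (σ (σ y))) (g (σ (σ y)))).trans ?_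
  gcongr
  exact BoundedContinuousFunction.dist_coe_le_dist _

lemma exists_continuous_continuedFraction (σ : C(Y, Y)) (d : C(Y, ℝ≥0)) (hδ : 0 < δ)
    (hd : ∀ y, δ ≤ d y) : ∃ ρ : C(Y, ℝ≥0), ∀ y, ρ y * (d y + ρ (σ y)) = 1 := by
  have hfixed := (contractingWith_continuedFractionMap σ d hδ hd).isFixedPt_fixedPoint_iterate
  set ρ := (contractingWith_continuedFractionMap σ d hδ hd).fixedPoint
  refine ⟨ρ, fun y => ?_⟩
  have hρ : ρ y = (d y + ρ (σ y))⁻¹ := (DFunLike.congr_fun hfixed y).symm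
  change ρ y * (d y + ρ (σ y)) = 1
  rw [hρ, inv_mul_cancel₀ (hδ.trans_le ((hd y).trans le_self_add)).ne']

end ContinuedFraction

section Existence

variable {X : Type*} [TopologicalSpace X] {c : ℕ → X → ℝ} {δ : ℝ}

lemma exists_continuous_isRecessive (hδ : 0 < δ) (hcont : ∀ n, Continuous (c n))
    (hc : ∀ n x, δ ≤ c (n + 1) x) :
    ∃ r : X → ℝ, Continuous r ∧
      ∀ x, ∃ z, IsRecessive (fun n => c n x) z ∧ z 0 = 1 ∧ z 1 = r x := by
  let σ : C(ℕ × X, ℕ × X) := ⟨fun p => (p.1 + 1, p.2), by fun_prop⟩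
  let d : C(ℕ × X, ℝ≥0) := ⟨fun p => (c (p.1 + 1) p.2).toNNReal,
    continuous_prod_of_discrete_left.2 fun n => continuous_real_toNNReal.comp (hcont (n + 1))⟩
  have hd : ∀ n x, (d (n, x) : ℝ) = c (n + 1) x := fun n x =>
    Real.coe_toNNReal _ (hδ.le.trans (hc n x))
  obtain ⟨ρ, hρ⟩ := exists_continuous_continuedFraction σ d (Real.toNNReal_pos.2 hδ)
    fun p => Real.toNNReal_le_toNNReal (hc p.1 p.2)
  have hρ_mul : ∀ n x, (ρ (n, x) : ℝ) * (c (n + 1) x + ρ (n + 1, x)) = 1 := fun n x => by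
    rw [← hd]
    exact_mod_cast hρ (n, x)
  have hρ_pos : ∀ n x, 0 < (ρ (n, x) : ℝ) := fun n x => by
    have : ρ (n, x) ≠ 0 := left_ne_zero_of_mul_eq_one (hρ (n, x))
    positivity
  refine ⟨fun x => ρ (0, x), by fun_prop, fun x =>
    ⟨fun n => ∏ i ∈ Finset.range n, (ρ (i, x) : ℝ), ?_, by simp, by simp⟩⟩
  refine isRecessive_of_pos hδ (fun n => hc n x) (fun n => ?_)
    fun n => Finset.prod_pos fun i _ => hρ_pos i x
  simp only [Finset.prod_range_succ]
  linear_combination -(∏ i ∈ Finset.range n, (ρ (i, x) : ℝ)) * hρ_mul n x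

lemma exists_isRecessive_matching [PreconnectedSpace X] (hδ : 0 < δ)
    (hcont : ∀ n, Continuous (c n)) (hc : ∀ n x, δ ≤ c (n + 1) x) {e : X → ℝ} (he : Continuous e)
    (b : ℝ) {p q : X}
    (hp : ∀ z, IsRecessive (fun n => c n p) z → 0 < z 0 → e p * z 0 ≤ b * z 1)
    (hq : ∀ z, IsRecessive (fun n => c n q) z → 0 < z 0 → b * z 1 ≤ e q * z 0) :
    ∃ x z, IsRecessive (fun n => c n x) z ∧ 0 < z 0 ∧ e x * z 0 = b * z 1 := by
  obtain ⟨r, hr_cont, hr⟩ := exists_continuous_isRecessive hδ hcont hc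
  have hep : e p ≤ b * r p := by
    obtain ⟨z, hz, h0, h1⟩ := hr p
    simpa [h0, h1] using hp z hz (by simp [h0])
  have heq : b * r q ≤ e q := by
    obtain ⟨z, hz, h0, h1⟩ := hr q
    simpa [h0, h1] using hq z hz (by simp [h0])
  obtain ⟨x, hx⟩ := intermediate_value_univ₂ he (hr_cont.const_mul b) hep heq
  obtain ⟨z, hz, h0, h1⟩ := hr x
  exact ⟨x, z, hz, by simp [h0], by rw [h0, h1, mul_one, hx]⟩

end Existence

section TwoSided

variable {𝕜 : Type*} [RCLike 𝕜] {c Z : ℤ → 𝕜}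

/-- Solutions of the two-sided recursion `Z (n - 1) = c n * Z n + Z (n + 1)`, the form taken by the
line problem in the unknown `A_n ω_n`. -/
def IsTwoSidedSolution (c Z : ℤ → 𝕜) : Prop :=
  ∀ n, Z (n - 1) = c n * Z n + Z (n + 1)

/-- The reflection `n ↦ -n`, with the sign that makes it preserve the two-sided recursion when the
coefficients are even. -/
def alternatingReflection (Z : ℤ → 𝕜) (n : ℤ) : 𝕜 := (-1) ^ n * Z (-n)

/-- The extension of a half-line sequence to `ℤ` that is invariant under
`alternatingReflection`. -/
def symmetricExtension (z : ℕ → 𝕜) : ℤ → 𝕜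
  | (n : ℕ) => z n
  | Int.negSucc n => (-1) ^ (n + 1) * z (n + 1)

lemma symmetricExtension_natCast (z : ℕ → 𝕜) (n : ℕ) : symmetricExtension z n = z n := rfl

lemma symmetricExtension_neg_natCast (z : ℕ → 𝕜) (n : ℕ) :
    symmetricExtension z (-n) = (-1) ^ n * z n := by
  cases n with
  | zero => simpa using symmetricExtension_natCast z 0
  | succ n => rfl

lemma summable_symmetricExtension {z : ℕ → 𝕜} (hz : Summable fun n => ‖z n‖ ^ 2) :
    Summable fun n => ‖symmetricExtension z n‖ ^ 2 :=
  .of_nat_of_neg hz (by simpa [symmetricExtension_neg_natCast] using hz)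

lemma tendsto_alternatingReflection (hlim : Tendsto Z cofinite (𝓝 0)) :
    Tendsto (alternatingReflection Z) cofinite (𝓝 0) := by
  have h := (hlim.comp neg_injective.tendsto_cofinite).norm
  rw [norm_zero] at h
  exact squeeze_zero_norm (fun n => by simp [alternatingReflection]) h

namespace IsTwoSidedSolution

lemma isRecessive (hZ : IsTwoSidedSolution c Z) (hlim : Tendsto Z cofinite (𝓝 0)) :
    IsRecessive (fun n : ℕ => c n) fun n : ℕ => Z n where
  step n := by
    have := hZ (n + 1)
    rw [add_sub_cancel_right, add_assoc, one_add_one_eq_two] at this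
    exact_mod_cast this
  tendsto_zero := by
    rw [← Nat.cofinite_eq_atTop]
    exact hlim.comp Nat.cast_injective.tendsto_cofinite

lemma reflect (hZ : IsTwoSidedSolution c Z) (hc : ∀ n, c (-n) = c n) :
    IsTwoSidedSolution c (alternatingReflection Z) := by
  intro n
  have h := hZ (-n)
  have h1 : (-1 : 𝕜) ≠ 0 := by simp
  have e1 : -(n - 1) = -n + 1 := by ring
  have e2 : -(n + 1) = -n - 1 := by ring
  simp only [alternatingReflection, zpow_sub_one₀ h1, zpow_add_one₀ h1, inv_neg_one, e1, e2]
  rw [hc] at h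
  linear_combination (-1) ^ n * h

lemma add {Z' : ℤ → 𝕜} (hZ : IsTwoSidedSolution c Z) (hZ' : IsTwoSidedSolution c Z') :
    IsTwoSidedSolution c fun n => Z n + Z' n := fun n => by
  linear_combination hZ n + hZ' n

lemma apply_zero_ne_zero (hZ : IsTwoSidedSolution c Z) (hlim : Tendsto Z cofinite (𝓝 0))
    (heven : ∀ n, c (-n) = c n) (hc : ∀ n : ℕ, 0 < RCLike.re (c (n + 1 : ℕ))) (hne : Z ≠ 0) :
    Z 0 ≠ 0 := by
  intro h0
  refine hne (funext fun n => ?_)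
  have hright := (hZ.isRecessive hlim).eq_zero hc h0
  have hleft := ((hZ.reflect heven).isRecessive (tendsto_alternatingReflection hlim)).eq_zero hc
    (by simpa [alternatingReflection] using h0)
  obtain ⟨m, rfl | rfl⟩ := n.eq_nat_or_neg
  · exact hright m
  · simpa [alternatingReflection] using hleft m

lemma exists_isRecessive_matching (hZ : IsTwoSidedSolution c Z) (hlim : Tendsto Z cofinite (𝓝 0))
    (heven : ∀ n, c (-n) = c n) (hc : ∀ n : ℕ, 0 < RCLike.re (c (n + 1 : ℕ))) (hne : Z ≠ 0) :
    ∃ z, IsRecessive (fun n : ℕ => c n) z ∧ z 0 ≠ 0 ∧ c 0 * z 0 = -2 * z 1 := by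
  have hsymm := hZ.add (hZ.reflect heven)
  have hsymm_lim := hlim.add (tendsto_alternatingReflection hlim)
  rw [add_zero] at hsymm_lim
  refine ⟨_, hsymm.isRecessive hsymm_lim, ?_, ?_⟩
  · simpa [alternatingReflection, ← two_mul] using hZ.apply_zero_ne_zero hlim heven hc hne
  · have h := hZ 0
    simp only [zero_sub, zero_add] at h
    simp only [alternatingReflection, Nat.cast_zero, Nat.cast_one, zpow_zero, zpow_one, neg_zero]
    linear_combination -2 * h

end IsTwoSidedSolution

lemma isTwoSidedSolution_symmetricExtension {z : ℕ → 𝕜} (heven : ∀ n, c (-n) = c n)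
    (hz : IsRecessive (fun n : ℕ => c n) z) (h0 : c 0 * z 0 = -2 * z 1) :
    IsTwoSidedSolution c (symmetricExtension z)
  | 0 => by
    change (-1) ^ (0 + 1) * z (0 + 1) = c 0 * z 0 + z 1
    linear_combination -h0
  | (m + 1 : ℕ) => by
    have e1 : ((m + 1 : ℕ) : ℤ) - 1 = m := by simp
    have e2 : ((m + 1 : ℕ) : ℤ) + 1 = (m + 2 : ℕ) := by push_cast; ring
    rw [e1, e2]
    exact hz.step m
  | Int.negSucc m => by
    have e1 : -((m + 1 : ℕ) : ℤ) - 1 = -((m + 2 : ℕ) : ℤ) := by push_cast; ring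
    have e2 : -((m + 1 : ℕ) : ℤ) + 1 = -(m : ℤ) := by push_cast; ring
    rw [Int.negSucc_eq, ← Nat.cast_succ, e1, e2, heven]
    simp only [symmetricExtension_neg_natCast, Nat.succ_eq_add_one]
    linear_combination -(-1) ^ m * hz.step m

end TwoSided

section SquareSummable

variable {ι E : Type*} [NormedAddCommGroup E] {ω : ι → E}

lemma memℓp_two_iff_summable : Memℓp ω 2 ↔ Summable fun n => ‖ω n‖ ^ 2 := by
  rw [memℓp_gen_iff (by norm_num)]
  simp

lemma tendsto_zero_of_memℓp_two (hω : Memℓp ω 2) : Tendsto ω cofinite (𝓝 0) := by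
  have h := (memℓp_two_iff_summable.1 hω).tendsto_cofinite_zero.sqrt
  simp only [Real.sqrt_sq (norm_nonneg _), Real.sqrt_zero] at h
  exact tendsto_zero_iff_norm_tendsto_zero.2 h

end SquareSummable

section LineProblem

variable {α ε ε' μ μ' : ℝ} {lam : ℂ}

/-- The coefficient `A_n` of the line through `(0, -1)`, with `n` allowed to be real. -/
noncomputable def shearCoef (α x : ℝ) : ℝ := α / 2 * (1 - 1 / (x ^ 2 + α ^ 2))

lemma shearCoef_neg (α x : ℝ) : shearCoef α (-x) = shearCoef α x := by
  simp [shearCoef]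

lemma shearCoef_abs (α x : ℝ) : shearCoef α |x| = shearCoef α x := by
  simp [shearCoef]

lemma shearCoef_le_shearCoef {x y : ℝ} (hα : 0 < α) (hx : 0 ≤ x) (hxy : x ≤ y) :
    shearCoef α x ≤ shearCoef α y := by
  unfold shearCoef
  gcongr

lemma shearCoef_zero (hα : 0 < α) : shearCoef α 0 = -(1 - α ^ 2) / (2 * α) := by
  unfold shearCoef
  field_simp
  ring

lemma shearCoef_one (hα : 0 < α) : shearCoef α 1 = α ^ 3 / (2 * (1 + α ^ 2)) := by
  unfold shearCoef
  field_simp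
  ring

lemma shearCoef_two (hα : 0 < α) : shearCoef α 2 = α * (3 + α ^ 2) / (2 * (4 + α ^ 2)) := by
  unfold shearCoef
  field_simp
  ring

lemma shearCoef_pos {x : ℝ} (hα : 0 < α) (hx : 1 ≤ x) : 0 < shearCoef α x := by
  have h1 : 0 < shearCoef α 1 := by
    rw [shearCoef_one hα]
    positivity
  exact h1.trans_le (shearCoef_le_shearCoef hα zero_le_one hx)

lemma shearCoef_natCast_succ_pos (hα : 0 < α) (n : ℕ) : 0 < shearCoef α (n + 1 : ℕ) :=
  shearCoef_pos hα (by simp)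

lemma shearCoef_lt (hα : 0 < α) (x : ℝ) : shearCoef α x < α / 2 := by
  have : 0 < 1 / (x ^ 2 + α ^ 2) := by positivity
  unfold shearCoef
  nlinarith

lemma abs_shearCoef_le (hα : 0 < α) (x : ℝ) : |shearCoef α x| ≤ max (α / 2) |shearCoef α 0| := by
  have hge : shearCoef α 0 ≤ shearCoef α x := by
    simpa [shearCoef_abs] using shearCoef_le_shearCoef hα le_rfl (abs_nonneg x)
  refine abs_le.2 ⟨?_, (shearCoef_lt hα x).le.trans (le_max_left _ _)⟩
  linarith [neg_abs_le (shearCoef α 0), le_max_right (α / 2) |shearCoef α 0|]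

lemma exists_pos_le_abs_shearCoef (hα : 0 < α) (hα1 : α ≠ 1) :
    ∃ m, 0 < m ∧ ∀ n : ℤ, m ≤ |shearCoef α n| := by
  have h0 : shearCoef α 0 ≠ 0 := by
    have : 1 - α ^ 2 ≠ 0 := sub_ne_zero.2 fun h => hα1 <|
      (pow_eq_one_iff_of_nonneg hα.le two_ne_zero).1 h.symm
    rw [shearCoef_zero hα]
    exact div_ne_zero (neg_ne_zero.2 this) (by positivity)
  have h1 : 0 < shearCoef α 1 := shearCoef_pos hα le_rfl
  refine ⟨min |shearCoef α 0| (shearCoef α 1), lt_min (abs_pos.2 h0) h1, fun n => ?_⟩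
  rcases eq_or_ne n 0 with rfl | hn
  · simp
  · have hn1 : (1 : ℝ) ≤ |(n : ℝ)| := by exact_mod_cast Int.one_le_abs hn
    have := shearCoef_le_shearCoef hα zero_le_one hn1
    rw [shearCoef_abs] at this
    exact (min_le_right _ _).trans (this.trans (le_abs_self _))

lemma shearCoef_intCast_ne_zero (hα : 0 < α) (hα1 : α ≠ 1) (n : ℤ) : shearCoef α n ≠ 0 := by
  obtain ⟨m, hm, hle⟩ := exists_pos_le_abs_shearCoef hα hα1
  exact abs_pos.1 (hm.trans_le (hle n))

/-- The viscous damping `ε |k̂ + n p|²` on the line through `(0, -1)`, with `n` allowed to be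
real. -/
def damping (α ε x : ℝ) : ℝ := ε * (x ^ 2 + α ^ 2)

lemma damping_zero (α ε : ℝ) : damping α ε 0 = ε * α ^ 2 := by
  simp [damping]

lemma damping_pos (hα : 0 < α) (hε : 0 < ε) (x : ℝ) : 0 < damping α ε x := by
  unfold damping
  positivity

lemma damping_zero_le (hε : 0 ≤ ε) (x : ℝ) : damping α ε 0 ≤ damping α ε x := by
  rw [damping_zero, damping]
  gcongr
  exact le_add_of_nonneg_left (sq_nonneg x)

/-- The coefficient of the recursion satisfied by `A_n ω_n`, for a real spectral parameter `μ`. -/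
noncomputable def lineCoef (α ε μ x : ℝ) : ℝ := (μ + damping α ε x) / shearCoef α x

lemma re_lineCoef (α ε : ℝ) (lam : ℂ) (x : ℝ) :
    ((lam + damping α ε x) / shearCoef α x).re = lineCoef α ε lam.re x := by
  simp [lineCoef, Complex.div_ofReal_re]

lemma two_mul_le_lineCoef (hα : 0 < α) (hε : 0 < ε) (hμ : 0 ≤ μ) (n : ℕ) :
    2 * ε * α ≤ lineCoef α ε μ (n + 1 : ℕ) := by
  rw [lineCoef, le_div_iff₀ (shearCoef_natCast_succ_pos hα n)]
  have hA := mul_lt_mul_of_pos_left (shearCoef_lt hα (n + 1 : ℕ)) (mul_pos hε hα)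
  have hd := damping_zero_le (α := α) hε.le (n + 1 : ℕ)
  rw [damping_zero] at hd
  linarith

lemma lineCoef_pos (hα : 0 < α) (hε : 0 < ε) (hμ : 0 ≤ μ) (n : ℕ) :
    0 < lineCoef α ε μ (n + 1 : ℕ) :=
  (show 0 < 2 * ε * α by positivity).trans_le (two_mul_le_lineCoef hα hε hμ n)

lemma lineEqn_iff (hα : 0 < α) (hα1 : α ≠ 1) {ω : ℤ → ℂ} :
    LineEqn α ε (0, -1) lam ω ↔
      IsTwoSidedSolution (fun n : ℤ => (lam + damping α ε n) / shearCoef α n)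
        fun n => shearCoef α n * ω n := by
  have hA : ∀ m : ℤ, coefA α (1, 0) (m, -1) = shearCoef α m := fun m => by
    simp [coefA, shearCoef]
    ring
  refine forall_congr' fun n => ?_
  have hne : (shearCoef α n : ℂ) ≠ 0 := by exact_mod_cast shearCoef_intCast_ne_zero hα hα1 n
  simp only [zero_add, hA, Int.cast_zero, Int.cast_neg, Int.cast_one, mul_neg, mul_one, neg_sq]
  rw [← mul_assoc, div_mul_cancel₀ _ hne, damping]
  constructor <;> intro h <;> linear_combination h

lemma memℓp_shearCoef_mul_iff (hα : 0 < α) (hα1 : α ≠ 1) {ω : ℤ → ℂ} :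
    Memℓp (fun n : ℤ => shearCoef α n * ω n) 2 ↔ Memℓp ω 2 := by
  obtain ⟨m, hm, hle⟩ := exists_pos_le_abs_shearCoef hα hα1
  refine ⟨fun h => (h.const_mul (m⁻¹ : ℂ)).mono' fun n => ?_,
    fun h => (h.const_mul ((max (α / 2) |shearCoef α 0| : ℝ) : ℂ)).mono' fun n => ?_⟩
  · simp only [norm_mul, norm_inv, Complex.norm_real, Real.norm_eq_abs, abs_of_pos hm]
    rw [le_inv_mul_iff₀ hm]
    gcongr
    exact hle n
  · simp only [norm_mul, Complex.norm_real, Real.norm_eq_abs]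
    exact mul_le_mul_of_nonneg_right ((abs_shearCoef_le hα n).trans (le_abs_self _))
      (norm_nonneg _)

-- Energy identity with weight `e = -i (Im λ) (λ + κ 0)`, for which the matching condition makes the
-- boundary term vanish.
lemma IsRecessive.im_eq_zero {a κ : ℕ → ℝ} {z : ℕ → ℂ} {b : ℝ}
    (hz : IsRecessive (fun n => (lam + κ n) / a n) z) (ha : ∀ n, 0 < a (n + 1)) (hκ0 : 0 < κ 0)
    (hκ : ∀ n, κ 0 ≤ κ n) (hlam : 0 ≤ lam.re) (h1 : z 1 ≠ 0)
    (hmatch : (lam + κ 0) * z 0 = b * z 1) : lam.im = 0 := by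
  by_contra him
  let e : ℂ := -Complex.I * lam.im * (lam + κ 0)
  have hodd : ∀ n, (e * ((lam + κ (n + 1)) / a (n + 1))).re
      = lam.im ^ 2 * (lam.re + κ 0 + (lam.re + κ (n + 1))) / a (n + 1) := fun n => by
    rw [← mul_div_assoc, Complex.div_ofReal_re]
    congr 1
    simp [e]
    ring
  have heven : ∀ n, (e * conj ((lam + κ (n + 1)) / a (n + 1))).re
      = lam.im ^ 2 * (κ (n + 1) - κ 0) / a (n + 1) := fun n => by
    rw [map_div₀, Complex.conj_ofReal, ← mul_div_assoc, Complex.div_ofReal_re]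
    congr 1
    simp [e]
    ring
  have hpos : 0 < (e * (z 0 * conj (z 1))).re := by
    refine hz.re_mul_conj_pos (fun k => ?_) (fun k => ?_) h1
    · have hκk := hκ0.trans_le (hκ (2 * k + 1))
      have hak := ha (2 * k)
      exact lt_of_lt_of_eq (by positivity) (hodd (2 * k)).symm
    · have hκk := sub_nonneg.2 (hκ (2 * k + 2))
      have hak := ha (2 * k + 1)
      exact le_of_le_of_eq (by positivity) (heven (2 * k + 1)).symm
  have hzero : e * (z 0 * conj (z 1)) = ((-lam.im * b * ‖z 1‖ ^ 2 : ℝ) : ℂ) * Complex.I := by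
    push_cast
    rw [← Complex.mul_conj']
    linear_combination -Complex.I * lam.im * conj (z 1) * hmatch
  rw [hzero, Complex.re_ofReal_mul, Complex.I_re, mul_zero] at hpos
  exact lt_irrefl 0 hpos

/-- A real eigenvalue, seen on the half-line: the recessive solution satisfies the matching
condition at `0` that makes its symmetric extension a solution on `ℤ`. -/
def IsCritical (α ε μ : ℝ) : Prop :=
  ∃ z, IsRecessive (fun n : ℕ => lineCoef α ε μ n) z ∧ 0 < z 0 ∧
    (μ + damping α ε 0) * z 0 = -2 * shearCoef α 0 * z 1

lemma IsRecessive.isCritical {z : ℕ → ℂ} (hz : IsRecessive (fun n : ℕ => (lineCoef α ε μ n : ℂ)) z)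
    (h0 : z 0 ≠ 0) (hmatch : (μ + damping α ε 0) * z 0 = (-2 * shearCoef α 0 : ℝ) * z 1) :
    IsCritical α ε μ := by
  refine ⟨_, (hz.const_mul (z 0)⁻¹).re, by simp [h0], ?_⟩
  have h := congrArg (fun w => ((z 0)⁻¹ * w).re) hmatch
  simpa only [mul_left_comm (z 0)⁻¹, Complex.re_ofReal_mul, ← Complex.ofReal_add] using h

lemma IsTwoSidedSolution.im_eq_zero_and_isCritical {Z : ℤ → ℂ}
    (hZ : IsTwoSidedSolution (fun n : ℤ => (lam + damping α ε n) / shearCoef α n) Z)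
    (hlim : Tendsto Z cofinite (𝓝 0)) (hne : Z ≠ 0) (hα : 0 < α) (hα1 : α ≠ 1) (hε : 0 < ε)
    (hlam : 0 ≤ lam.re) : lam.im = 0 ∧ IsCritical α ε lam.re := by
  have hre : ∀ n : ℕ, 0 < ((lam + damping α ε (n + 1 : ℕ)) / shearCoef α (n + 1 : ℕ)).re :=
    fun n => (re_lineCoef α ε lam _).symm ▸ lineCoef_pos hα hε hlam n
  obtain ⟨z, hz, h0, hmatch⟩ := hZ.exists_isRecessive_matching hlim
    (fun n => by simp [shearCoef_neg, damping]) hre hne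
  simp only [Int.cast_natCast] at hz
  have hmatch' : (lam + damping α ε 0) * z 0 = (-2 * shearCoef α 0 : ℝ) * z 1 := by
    have hA0 : (shearCoef α 0 : ℂ) ≠ 0 := by
      simpa using shearCoef_intCast_ne_zero hα hα1 0
    rw [Int.cast_zero, div_mul_eq_mul_div, div_eq_iff hA0] at hmatch
    push_cast
    linear_combination hmatch
  have him : lam.im = 0 := hz.im_eq_zero (κ := fun n => damping α ε n)
    (a := fun n => shearCoef α n) (shearCoef_natCast_succ_pos hα) (damping_pos hα hε _)
    (fun n => by simpa using damping_zero_le hε.le n) hlam (hz.succ_ne_zero hre h0)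
    (by simpa only [Nat.cast_zero] using hmatch')
  obtain ⟨μ, rfl⟩ : ∃ μ : ℝ, (μ : ℂ) = lam := ⟨lam.re, Complex.ext rfl (by simp [him])⟩
  refine ⟨him, IsRecessive.isCritical ?_ h0 hmatch'⟩
  simpa [lineCoef] using hz

lemma IsCritical.exists_isTwoSidedSolution (h : IsCritical α ε μ) (hα : 0 < α) (hα1 : α ≠ 1)
    (hε : 0 < ε) (hμ : 0 ≤ μ) :
    ∃ Z : ℤ → ℝ, IsTwoSidedSolution (fun n : ℤ => lineCoef α ε μ n) Z ∧ Z ≠ 0 ∧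
      Summable fun n => ‖Z n‖ ^ 2 := by
  obtain ⟨z, hz, h0, hmatch⟩ := h
  have hA0 : shearCoef α 0 ≠ 0 := by simpa using shearCoef_intCast_ne_zero hα hα1 0
  refine ⟨symmetricExtension z, isTwoSidedSolution_symmetricExtension
    (fun n => by simp [lineCoef, shearCoef_neg, damping]) (by simpa using hz) ?_,
    fun hzero => h0.ne' (congrFun hzero 0), summable_symmetricExtension <|
      hz.summable_norm_sq (δ := 2 * ε * α) (by positivity) (two_mul_le_lineCoef hα hε hμ)⟩
  rw [Int.cast_zero, lineCoef, div_mul_eq_mul_div, div_eq_iff hA0, hmatch]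
  ring

lemma isLineEig_iff (hα : 0 < α) (hα1 : α ≠ 1) (hε : 0 < ε) (hlam : 0 ≤ lam.re) :
    IsLineEig α ε (0, -1) lam ↔ lam.im = 0 ∧ IsCritical α ε lam.re := by
  have hA : ∀ n : ℤ, (shearCoef α n : ℂ) ≠ 0 := fun n => by
    exact_mod_cast shearCoef_intCast_ne_zero hα hα1 n
  constructor
  · rintro ⟨ω, hω, hne, hL⟩
    have hlim := tendsto_zero_of_memℓp_two ((memℓp_shearCoef_mul_iff hα hα1).2 hω)
    have hne' : (fun n : ℤ => (shearCoef α n : ℂ) * ω n) ≠ 0 := fun hzero =>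
      hne (funext fun n => (mul_eq_zero.1 (congrFun hzero n)).resolve_left (hA n))
    exact ((lineEqn_iff hα hα1).1 hL).im_eq_zero_and_isCritical hlim hne' hα hα1 hε hlam
  · rintro ⟨him, h⟩
    obtain ⟨μ, rfl⟩ : ∃ μ : ℝ, (μ : ℂ) = lam := ⟨lam.re, Complex.ext rfl (by simp [him])⟩
    obtain ⟨Z, hZ, hne, hsum⟩ := h.exists_isTwoSidedSolution hα hα1 hε hlam
    have hAω : (fun n : ℤ => (shearCoef α n : ℂ) * (Z n / shearCoef α n)) = fun n => (Z n : ℂ) :=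
      funext fun n => mul_div_cancel₀ _ (hA n)
    refine ⟨fun n => Z n / shearCoef α n, ?_, fun hzero => hne (funext fun n => ?_), ?_⟩
    · rw [← memℓp_shearCoef_mul_iff hα hα1, hAω, memℓp_two_iff_summable]
      simpa using hsum
    · simpa [hA n] using congrFun hzero n
    · rw [lineEqn_iff hα hα1, hAω]
      intro n
      simpa [lineCoef] using congrArg ((↑) : ℝ → ℂ) (hZ n)

lemma isLineEig_ofReal_iff (hα : 0 < α) (hα1 : α ≠ 1) (hε : 0 < ε) (hμ : 0 ≤ μ) :
    IsLineEig α ε (0, -1) μ ↔ IsCritical α ε μ := by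
  simpa using isLineEig_iff (lam := μ) hα hα1 hε (by simpa using hμ)

lemma IsRecessive.mul_lt_mul_of_lineCoef {z z' : ℕ → ℝ}
    (hz : IsRecessive (fun n : ℕ => lineCoef α ε μ n) z)
    (hz' : IsRecessive (fun n : ℕ => lineCoef α ε' μ' n) z') (h0 : 0 < z 0) (h0' : 0 < z' 0)
    (hα : 0 < α) (hε : 0 < ε) (hμ : 0 ≤ μ) (hεε' : ε ≤ ε') (hμμ' : μ ≤ μ')
    (hcross : μ * ε' ≤ ε * μ') (hlt : μ < μ' ∨ ε < ε') :
    (μ + damping α ε 0) * (z 0 * z' 1) < (μ' + damping α ε' 0) * (z' 0 * z 1) := by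
  have hε' : 0 < ε' := hε.trans_le hεε'
  have hrate_pos : ∀ x, 0 < μ + damping α ε x := fun x => add_pos_of_nonneg_of_pos hμ
    (damping_pos hα hε x)
  have hrate_lt : ∀ x, μ + damping α ε x < μ' + damping α ε' x := fun x => by
    have hx : 0 < x ^ 2 + α ^ 2 := by positivity
    unfold damping
    rcases hlt with h | h
    · exact add_lt_add_of_lt_of_le h (mul_le_mul_of_nonneg_right hεε' hx.le)
    · exact add_lt_add_of_le_of_lt hμμ' (mul_lt_mul_of_pos_right h hx)
  have hrate_cross : ∀ x, (μ + damping α ε 0) * (μ' + damping α ε' x)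
      ≤ (μ' + damping α ε' 0) * (μ + damping α ε x) := fun x => by
    have := mul_le_mul_of_nonneg_right hcross (sq_nonneg x)
    simp only [damping]
    linear_combination this
  refine hz.mul_lt_mul_of_coeff hz' (hz.pos (lineCoef_pos hα hε hμ) h0)
    (hz'.pos (lineCoef_pos hα hε' (hμ.trans hμμ')) h0') (fun k => ?_) fun k => ?_
  · have hA := shearCoef_natCast_succ_pos hα (2 * k)
    simp only [lineCoef, ← mul_div_assoc]
    refine div_lt_div_of_pos_right ?_ hA
    exact mul_lt_mul'' (hrate_lt 0) (hrate_lt _) (hrate_pos 0).le (hrate_pos _).le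
  · have hA := shearCoef_natCast_succ_pos hα (2 * k + 1)
    simp only [lineCoef, ← mul_div_assoc]
    exact div_le_div_of_nonneg_right (hrate_cross _) hA.le

lemma IsCritical.not_isCritical_of_lt (h : IsCritical α ε μ) (hα : 0 < α) (hε : 0 < ε) (hμ : 0 ≤ μ)
    (hεε' : ε ≤ ε') (hμμ' : μ ≤ μ') (hcross : μ * ε' ≤ ε * μ') (hlt : μ < μ' ∨ ε < ε') :
    ¬ IsCritical α ε' μ' := by
  rintro ⟨z', hz', h0', hmatch'⟩
  obtain ⟨z, hz, h0, hmatch⟩ := h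
  have := hz.mul_lt_mul_of_lineCoef hz' h0 h0' hα hε hμ hεε' hμμ' hcross hlt
  rw [← mul_assoc, ← mul_assoc, hmatch, hmatch'] at this
  linarith

lemma IsCritical.viscosity_le (hs : IsCritical α ε 0) (h : IsCritical α ε' μ) (hα : 0 < α)
    (hε : 0 < ε) (hμ : 0 ≤ μ) : ε' ≤ ε := by
  by_contra! hlt
  exact hs.not_isCritical_of_lt hα hε le_rfl hlt.le hμ (by simp [hε.le, hμ, mul_nonneg])
    (.inr hlt) h

lemma IsCritical.eigenvalue_le (h : IsCritical α ε μ) (h' : IsCritical α ε μ') (hα : 0 < α)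
    (hε : 0 < ε) (hμ : 0 ≤ μ) : μ' ≤ μ := by
  by_contra! hlt
  exact h.not_isCritical_of_lt hα hε hμ le_rfl hlt.le (by rw [mul_comm]; gcongr) (.inl hlt) h'

lemma not_isLineEig_of_viscosity_lt (hs : IsCritical α ε 0) (hlt : ε < ε') (hα : 0 < α)
    (hα1 : α ≠ 1) (hε : 0 < ε) (hlam : 0 ≤ lam.re) : ¬ IsLineEig α ε' (0, -1) lam := fun h =>
  (hs.viscosity_le ((isLineEig_iff hα hα1 (hε.trans hlt) hlam).1 h).2 hα hε hlam).not_gt hlt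

lemma IsLineEig.eq_or_re_neg (h : IsLineEig α ε (0, -1) lam) (hcrit : IsCritical α ε μ)
    (hα : 0 < α) (hα1 : α ≠ 1) (hε : 0 < ε) (hμ : 0 ≤ μ) : lam = μ ∨ lam.re < 0 := by
  refine or_iff_not_imp_right.2 fun hre => ?_
  rw [not_lt] at hre
  obtain ⟨him, h⟩ := (isLineEig_iff hα hα1 hε hre).1 h
  exact Complex.ext ((hcrit.eigenvalue_le h hα hε hμ).antisymm (h.eigenvalue_le hcrit hα hε hre))
    (by simpa using him)

lemma exists_isCritical_mem_Ioo {a b ε₀ : ℝ} {ε μ : ℝ → ℝ} (hα : 0 < α) (hab : a ≤ b)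
    (hε₀ : 0 < ε₀) (hε : ∀ t ∈ Set.Icc a b, ε₀ ≤ ε t) (hμ : ∀ t ∈ Set.Icc a b, 0 ≤ μ t)
    (hε_cont : ContinuousOn ε (Set.Icc a b)) (hμ_cont : ContinuousOn μ (Set.Icc a b))
    (ha : ∀ z, IsRecessive (fun n : ℕ => lineCoef α (ε a) (μ a) n) z → 0 < z 0 →
      (μ a + damping α (ε a) 0) * z 0 < -2 * shearCoef α 0 * z 1)
    (hb : ∀ z, IsRecessive (fun n : ℕ => lineCoef α (ε b) (μ b) n) z → 0 < z 0 →
      -2 * shearCoef α 0 * z 1 < (μ b + damping α (ε b) 0) * z 0) :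
    ∃ t ∈ Set.Ioo a b, IsCritical α (ε t) (μ t) := by
  have hrate : ∀ y, Continuous fun t : Set.Icc a b => μ t + damping α (ε t) y := fun y => by
    rw [continuousOn_iff_continuous_domRestrict] at hε_cont hμ_cont
    exact hμ_cont.add (hε_cont.mul_const _)
  have : PreconnectedSpace (Set.Icc a b) := Subtype.preconnectedSpace isPreconnected_Icc
  obtain ⟨⟨t, hat, htb⟩, z, hz, h0, hmatch⟩ := exists_isRecessive_matching (δ := 2 * ε₀ * α)
    (c := fun n (t : Set.Icc a b) => lineCoef α (ε t) (μ t) n) (by positivity)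
    (fun n => (hrate n).div_const _)
    (fun n t => le_trans (by gcongr; exact hε t t.2)
      (two_mul_le_lineCoef hα (hε₀.trans_le (hε t t.2)) (hμ t t.2) n))
    (hrate 0) _ (p := ⟨a, le_rfl, hab⟩) (q := ⟨b, hab, le_rfl⟩)
    (fun z hz h0 => (ha z hz h0).le) (fun z hz h0 => (hb z hz h0).le)
  refine ⟨t, ⟨hat.lt_of_ne ?_, htb.lt_of_ne ?_⟩, z, hz, h0, hmatch⟩
  · rintro rfl
    exact (ha z hz h0).ne hmatch
  · rintro rfl
    exact (hb z hz h0).ne' hmatch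

lemma IsRecessive.matching_lt {z : ℕ → ℝ} (hz : IsRecessive (fun n : ℕ => lineCoef α ε μ n) z)
    (h0 : 0 < z 0) (hα : 0 < α) (hε : 0 < ε) (hμ : 0 ≤ μ)
    (hle : α ^ 2 * (1 - α ^ 2)
      ≤ 2 * (1 + α ^ 2) * ((μ + damping α ε 0) * (μ + damping α ε 1))) :
    -2 * shearCoef α 0 * z 1 < (μ + damping α ε 0) * z 0 := by
  have hpos := hz.pos (lineCoef_pos hα hε hμ) h0
  have hz0 : lineCoef α ε μ 1 * z 1 < z 0 := by
    have := hz.step 0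
    simp only [zero_add, Nat.cast_one] at this
    linarith [hpos 2]
  have hcoef : -2 * shearCoef α 0 ≤ (μ + damping α ε 0) * lineCoef α ε μ 1 := by
    rw [shearCoef_zero hα, lineCoef, shearCoef_one hα]
    field_simp
    linarith
  calc -2 * shearCoef α 0 * z 1 ≤ (μ + damping α ε 0) * lineCoef α ε μ 1 * z 1 :=
        mul_le_mul_of_nonneg_right hcoef (hpos 1).le
    _ < (μ + damping α ε 0) * z 0 := by
        rw [mul_assoc]
        exact mul_lt_mul_of_pos_left hz0 (add_pos_of_nonneg_of_pos hμ (damping_pos hα hε 0))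

lemma IsRecessive.lt_matching {z : ℕ → ℝ} (hz : IsRecessive (fun n : ℕ => lineCoef α ε 0 n) z)
    (h0 : 0 < z 0) (hα : 0 < α) (hε : 0 < ε)
    (hle : (2 * (α ^ 2 + 1) * (α ^ 2 + 4) * ε) ^ 2
      ≤ 32 - 3 * α ^ 6 - 17 * α ^ 4 - 16 * α ^ 2) :
    damping α ε 0 * z 0 < -2 * shearCoef α 0 * z 1 := by
  have hpos := hz.pos (lineCoef_pos hα hε le_rfl) h0
  have hc2 : 0 < lineCoef α ε 0 2 := lineCoef_pos hα hε le_rfl 1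
  have hz2 : z 2 < z 1 / lineCoef α ε 0 2 := by
    have := hz.step 1
    simp only [Nat.reduceAdd, Nat.cast_ofNat] at this
    rw [lt_div_iff₀' hc2]
    linarith [hpos 3]
  have hz0 : z 0 < (lineCoef α ε 0 1 + 1 / lineCoef α ε 0 2) * z 1 := by
    have := hz.step 0
    simp only [zero_add, Nat.cast_one] at this
    rw [this, add_mul, one_div_mul_eq_div]
    linarith
  have hcoef : damping α ε 0 * (lineCoef α ε 0 1 + 1 / lineCoef α ε 0 2)
      ≤ -2 * shearCoef α 0 := by
    have h4 : (2 : ℝ) ^ 2 = 4 := by norm_num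
    simp only [lineCoef, shearCoef_zero hα, shearCoef_one hα, shearCoef_two hα, damping, zero_add,
      zero_pow two_ne_zero, one_pow, h4]
    field_simp
    linear_combination hle
  calc damping α ε 0 * z 0
      < damping α ε 0 * ((lineCoef α ε 0 1 + 1 / lineCoef α ε 0 2) * z 1) :=
        mul_lt_mul_of_pos_left hz0 (damping_pos hα hε 0)
    _ ≤ -2 * shearCoef α 0 * z 1 := by
        rw [← mul_assoc]
        exact mul_le_mul_of_nonneg_right hcoef (hpos 1).le

/-- The lower bound for the critical viscosity: the value of `ε` at which the truncation
`c 1 + 1 / c 2` of the continued fraction satisfies the matching condition at `μ = 0`. -/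
noncomputable def viscosityLower (α : ℝ) : ℝ :=
  √(32 - 3 * α ^ 6 - 17 * α ^ 4 - 16 * α ^ 2) / (2 * (α ^ 2 + 1) * (α ^ 2 + 4))

/-- The upper bound for the critical viscosity: the value of `ε` at which the truncation `c 1` of
the continued fraction satisfies the matching condition at `μ = 0`. -/
noncomputable def viscosityUpper (α : ℝ) : ℝ :=
  1 / (α ^ 2 + 1) * √((1 - α ^ 2) / 2)

lemma mul_viscosityLower_sq (hR : 0 ≤ 32 - 3 * α ^ 6 - 17 * α ^ 4 - 16 * α ^ 2) :
    (2 * (α ^ 2 + 1) * (α ^ 2 + 4) * viscosityLower α) ^ 2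
      = 32 - 3 * α ^ 6 - 17 * α ^ 4 - 16 * α ^ 2 := by
  rw [viscosityLower, mul_div_cancel₀ _ (by positivity), Real.sq_sqrt hR]

lemma mul_viscosityUpper_sq (hα1 : α ^ 2 ≤ 1) :
    2 * ((α ^ 2 + 1) * viscosityUpper α) ^ 2 = 1 - α ^ 2 := by
  rw [viscosityUpper, ← mul_assoc, mul_one_div_cancel (by positivity), one_mul,
    Real.sq_sqrt (by linarith), mul_div_cancel₀ _ two_ne_zero]

lemma viscosityLower_pos (hR : 0 < 32 - 3 * α ^ 6 - 17 * α ^ 4 - 16 * α ^ 2) :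
    0 < viscosityLower α :=
  div_pos (Real.sqrt_pos.2 hR) (by positivity)

lemma viscosityLower_lt_viscosityUpper (hα : 0 < α) (hα1 : α ^ 2 ≤ 1)
    (hR : 0 ≤ 32 - 3 * α ^ 6 - 17 * α ^ 4 - 16 * α ^ 2) :
    viscosityLower α < viscosityUpper α := by
  have hU : 0 ≤ viscosityUpper α := by
    unfold viscosityUpper
    positivity
  have hsq : (2 * (α ^ 2 + 1) * (α ^ 2 + 4) * viscosityLower α) ^ 2
      < (2 * (α ^ 2 + 1) * (α ^ 2 + 4) * viscosityUpper α) ^ 2 := by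
    have : 0 < α ^ 4 * (α ^ 2 + 3) := by positivity
    rw [mul_viscosityLower_sq hR]
    linear_combination this - 2 * (α ^ 2 + 4) ^ 2 * mul_viscosityUpper_sq hα1
  exact lt_of_mul_lt_mul_left (lt_of_pow_lt_pow_left₀ 2 (by positivity) hsq) (by positivity)

lemma exists_isCritical_zero (hα : 0 < α) (hα1 : α ^ 2 ≤ 1)
    (hR : 0 < 32 - 3 * α ^ 6 - 17 * α ^ 4 - 16 * α ^ 2) :
    ∃ ε ∈ Set.Ioo (viscosityLower α) (viscosityUpper α), IsCritical α ε 0 := by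
  have hL := viscosityLower_pos hR
  have hLU := viscosityLower_lt_viscosityUpper hα hα1 hR.le
  refine exists_isCritical_mem_Ioo (ε := fun t => t) (μ := fun _ => 0) hα hLU.le hL
    (fun t ht => ht.1) (fun _ _ => le_rfl) continuousOn_id continuousOn_const
    (fun z hz h0 => ?_) fun z hz h0 => ?_
  · rw [zero_add]
    exact hz.lt_matching h0 hα hL (mul_viscosityLower_sq hR.le).le
  · refine hz.matching_lt h0 hα (hL.trans hLU) le_rfl (le_of_eq ?_)
    simp only [damping]
    linear_combination -α ^ 2 * mul_viscosityUpper_sq hα1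

lemma IsCritical.exists_pos_of_lt (hs : IsCritical α ε' 0) (hα : 0 < α) (hε : 0 < ε)
    (hlt : ε < ε') : ∃ μ, 0 < μ ∧ IsCritical α ε μ := by
  suffices ∃ μ ∈ Set.Ioo 0 1, IsCritical α ε μ from this.imp fun μ h => ⟨h.1.1, h.2⟩
  refine exists_isCritical_mem_Ioo (ε := fun _ => ε) (μ := fun t => t) hα zero_le_one hε
    (fun _ _ => le_rfl) (fun t ht => ht.1) continuousOn_const continuousOn_id
    (fun z hz h0 => ?_) fun z hz h0 => ?_
  · obtain ⟨z', hz', h0', hmatch'⟩ := hs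
    have h := hz.mul_lt_mul_of_lineCoef hz' h0 h0' hα hε le_rfl hlt.le le_rfl (by simp) (.inr hlt)
    rw [← mul_assoc, ← mul_assoc, hmatch', mul_right_comm (-2 * _)] at h
    exact lt_of_mul_lt_mul_right h (hz'.pos (lineCoef_pos hα (hε.trans hlt) le_rfl) h0' 1).le
  · have hone : ∀ x, 1 ≤ 1 + damping α ε x := fun x => by linarith [damping_pos hα hε x]
    have hrate := one_le_mul_of_one_le_of_one_le (hone 0) (hone 1)
    refine hz.matching_lt h0 hα hε zero_le_one ?_
    calc α ^ 2 * (1 - α ^ 2) ≤ 2 * (1 + α ^ 2) * 1 := by nlinarith [sq_nonneg (α ^ 2), sq_nonneg α]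
      _ ≤ _ := by gcongr

end LineProblem

lemma viscosityLower_radicand_pos {α : ℝ} (hα0 : 0 ≤ α) (hα : α ≤ 0.95) :
    0 < 32 - 3 * α ^ 6 - 17 * α ^ 4 - 16 * α ^ 2 := by
  have h2 := pow_le_pow_left₀ hα0 hα 2
  have h4 := pow_le_pow_left₀ hα0 hα 4
  have h6 := pow_le_pow_left₀ hα0 hα 6
  norm_num at h2 h4 h6
  linarith

theorem critical_viscosity_line_zero_neg_one_general {α : ℝ} (hα : 0 < α)
    (hR : 0 < 32 - 3 * α ^ 6 - 17 * α ^ 4 - 16 * α ^ 2) :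
    viscosityLower α < viscosityUpper α ∧
      ∃! εs : ℝ, 0 < εs ∧ viscosityLower α < εs ∧ εs < viscosityUpper α ∧
        (∀ ε : ℝ, εs < ε → ∀ lam : ℂ, 0 ≤ lam.re → ¬ IsLineEig α ε (0, -1) lam) ∧
        (IsLineEig α εs (0, -1) 0 ∧
          ∀ lam : ℂ, IsLineEig α εs (0, -1) lam → lam = 0 ∨ lam.re < 0) ∧
        ∀ ε : ℝ, 0 < ε → ε < εs → ∃ μ : ℝ, 0 < μ ∧ IsLineEig α ε (0, -1) μ ∧
          ∀ lam : ℂ, IsLineEig α ε (0, -1) lam → lam = μ ∨ lam.re < 0 := by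
  have hα1 : α < 1 := by
    by_contra! h
    linarith [one_le_pow₀ h (n := 2), one_le_pow₀ h (n := 4), one_le_pow₀ h (n := 6)]
  have hα_sq : α ^ 2 ≤ 1 := pow_le_one₀ hα.le hα1.le
  obtain ⟨εs, ⟨hLs, hsU⟩, hs⟩ := exists_isCritical_zero hα hα_sq hR
  have hs0 : 0 < εs := (viscosityLower_pos hR).trans hLs
  have hzero : ∀ {ε}, 0 < ε → (IsLineEig α ε (0, -1) 0 ↔ IsCritical α ε 0) := fun hε => by
    simpa using isLineEig_ofReal_iff hα hα1.ne hε le_rfl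
  refine ⟨viscosityLower_lt_viscosityUpper hα hα_sq hR.le, εs, ⟨hs0, hLs, hsU,
    fun ε hε lam => not_isLineEig_of_viscosity_lt hs hε hα hα1.ne hs0,
    ⟨(hzero hs0).2 hs, fun lam h => by simpa using h.eq_or_re_neg hs hα hα1.ne hs0 le_rfl⟩,
    fun ε hε hlt => ?_⟩, ?_⟩
  · obtain ⟨μ, hμ, hcrit⟩ := hs.exists_pos_of_lt hα hε hlt
    exact ⟨μ, hμ, (isLineEig_ofReal_iff hα hα1.ne hε hμ.le).2 hcrit,
      fun lam h => h.eq_or_re_neg hcrit hα hα1.ne hε hμ.le⟩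
  · rintro ε ⟨hε, -, -, -, ⟨h0, -⟩, -⟩
    have hcrit := (hzero hε).1 h0
    exact (hs.viscosity_le hcrit hα hs0 le_rfl).antisymm (hcrit.viscosity_le hs hα hε le_rfl)

/-- Existence and uniqueness of the critical viscosity `ε_*(α)` on the line
`k̂ = (0,−1)` for `α ∈ (0.5, 0.95)`, together with the instability/stability
description of the eigenvalues on either side of `ε_*(α)`. -/
theorem critical_viscosity_line_zero_neg_one
    (α : ℝ) (hα : 0.5 < α ∧ α < 0.95) :
    0 < 32 - 3 * α ^ 6 - 17 * α ^ 4 - 16 * α ^ 2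
    ∧ Real.sqrt (32 - 3 * α ^ 6 - 17 * α ^ 4 - 16 * α ^ 2)
        / (2 * (α ^ 2 + 1) * (α ^ 2 + 4))
      < (1 / (α ^ 2 + 1)) * Real.sqrt ((1 - α ^ 2) / 2)
    ∧ ∃! εs : ℝ, 0 < εs
        ∧ Real.sqrt (32 - 3 * α ^ 6 - 17 * α ^ 4 - 16 * α ^ 2)
            / (2 * (α ^ 2 + 1) * (α ^ 2 + 4)) < εs
        ∧ εs < (1 / (α ^ 2 + 1)) * Real.sqrt ((1 - α ^ 2) / 2)
        ∧ (∀ ε : ℝ, εs < ε →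
            ∀ lam : ℂ, 0 ≤ lam.re → ¬ IsLineEig α ε (0, -1) lam)
        ∧ (IsLineEig α εs (0, -1) 0
            ∧ ∀ lam : ℂ, IsLineEig α εs (0, -1) lam → lam = 0 ∨ lam.re < 0)
        ∧ (∀ ε : ℝ, 0 < ε → ε < εs →
            ∃ μ : ℝ, 0 < μ ∧ IsLineEig α ε (0, -1) (μ : ℂ)
              ∧ ∀ lam : ℂ, IsLineEig α ε (0, -1) lam → lam = (μ : ℂ) ∨ lam.re < 0) := by
  have hα0 : 0 < α := lt_trans (by norm_num) hα.1
  have hR := viscosityLower_radicand_pos hα0.le hα.2.le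
  exact ⟨hR, critical_viscosity_line_zero_neg_one_general hα0 hR⟩
end

section
/- Let α ∈ (0.5, 0.8469) and k̂ = (0,−1). Let L₀ be the bounded linear operator on ℓ²(ℤ;ℂ) defined by (L₀ω)_n = A_{n−1}ω_{n−1} − A_{n+1}ω_{n+1} with A_n = A(p, k̂+np). Then there exists λ₀ > 0 with √(α²(1−α²)/(2(α²+1)) − α⁴(α²+3)/(4(α²+1)(α²+4))) < λ₀ < √(α²(1−α²)/(2(α²+1))) such that λ₀ and −λ₀ are the only eigenvalues of L₀, and the spectrum of L₀ equals {λ₀, −λ₀} ∪ {it : t ∈ ℝ, |t| ≤ α} (the segment being continuous spectrum). -/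
/-! The operator is `L = S D`, where `S` is the skew-adjoint difference of the two unit shifts and
`D` is multiplication by the even real sequence `A_n`, which is negative at `n = 0` only and
increases to `α / 2` as `|n| → ∞`.

* Replacing `A_0` by `0` turns `D` into some `D₊ ≥ 0`, and `S D₊` has the spectrum of the
  skew-adjoint operator `√D₊ S √D₊`, of norm at most `α`, up to the point `0`. As `L` differs from
  `S D₊` by an operator of rank one, a spectral point of `L` off the segment `[-iα, iα]` is an
  eigenvalue.
* Skewness of `S` makes eigenvectors for eigenvalues in the right half-plane isotropic and mutually
  orthogonal for the form `⟪D x, y⟫`, which has a single negative square, so there is at most one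
  such eigenvalue. Conjugation by `(-1)ⁿ` maps `L` to `-L`.
* `L ^ 2` preserves the sequences supported on odd indices. There it is similar to a self-adjoint
  operator whose form is `-⟪D y, y⟫`, with `y` ranging over a set whose closure contains the basis
  vector `e₀`. As `A_0 < 0`, the operator `L ^ 2` has a positive spectral point, hence `L` has a
  real nonzero one.
* On the imaginary axis the substitution `vₙ = iⁿ Aₙ ωₙ` turns the eigenvalue equation into
  `v (n - 1) + v (n + 1) = c n • v n` with `c n = s / A_n`. If `s < α`, a conserved-energy argument
  on either half-line, which never uses the equation at `n = 0`, leaves no nonzero solution tending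
  to `0`; hence `s i - L` is injective and its range misses `e₀`. If `s ≥ α`, solutions on the two
  half-lines decay convexly and cannot be matched at `n = 0`.
* For the bounds, `v = D ω` satisfies `v (n - 1) - v (n + 1) = (λ / A_n) • v n`. Decay on the
  half-lines confines `⟪v 0, v 1⟫` and `-⟪v 0, v (-1)⟫` to an interval given by `A_1` and `A_2`, and
  the equation at `n = 0` relates their sum to `A_0`.
-/

open Filter Topology
open scoped InnerProductSpace lp ENNReal

section Recurrence

variable {E : Type*} [NormedAddCommGroup E] [InnerProductSpace ℝ E]

/-- The quadratic form conserved by the recurrence `u + w = c • v` with constant coefficient. -/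
noncomputable def recurrenceEnergy (c : ℝ) (u v : E) : ℝ :=
  ‖u‖ ^ 2 + ‖v‖ ^ 2 - c * ⟪u, v⟫_ℝ

lemma recurrenceEnergy_eq_of_add_eq_smul {c : ℝ} {u v w : E} (h : u + w = c • v) :
    recurrenceEnergy c v w = recurrenceEnergy c u v := by
  obtain rfl : w = c • v - u := eq_sub_of_add_eq' h
  simp only [recurrenceEnergy, norm_sub_sq_real, inner_sub_right, real_inner_smul_left,
    real_inner_smul_right, norm_smul, mul_pow, Real.norm_eq_abs, sq_abs,
    real_inner_self_eq_norm_sq, real_inner_comm u v]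
  ring

lemma recurrenceEnergy_eq_norm_add_sub (c : ℝ) (u v : E) :
    recurrenceEnergy c u v = (2 - c) / 4 * ‖u + v‖ ^ 2 + (2 + c) / 4 * ‖u - v‖ ^ 2 := by
  rw [recurrenceEnergy, norm_add_sq_real, norm_sub_sq_real]
  ring

lemma recurrenceEnergy_div_le {c d : ℝ} (hd : -2 < d) (hdc : d ≤ c) (u v : E) :
    recurrenceEnergy c u v / (2 + c) ≤ recurrenceEnergy d u v / (2 + d) := by
  rw [div_le_div_iff₀ (by linarith) (by linarith), recurrenceEnergy_eq_norm_add_sub,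
    recurrenceEnergy_eq_norm_add_sub]
  linarith [mul_nonneg (sub_nonneg.2 hdc) (sq_nonneg ‖u + v‖)]

lemma eq_zero_of_recurrenceEnergy_nonpos {c : ℝ} (hc : -2 < c) (hc' : c < 2) {u v : E}
    (h : recurrenceEnergy c u v ≤ 0) : u = 0 := by
  rw [recurrenceEnergy_eq_norm_add_sub] at h
  have hadd : ‖u + v‖ ^ 2 ≤ 0 := by
    nlinarith [sq_nonneg ‖u + v‖, sq_nonneg ‖u - v‖]
  have hsub : ‖u - v‖ ^ 2 ≤ 0 := by
    nlinarith [sq_nonneg ‖u + v‖, sq_nonneg ‖u - v‖]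
  have hpar := parallelogram_law_with_norm ℝ u v
  have : ‖u‖ ^ 2 ≤ 0 := by nlinarith [sq_nonneg ‖v‖]
  simpa using this.antisymm (sq_nonneg _)

lemma tendsto_recurrenceEnergy_div {c : ℕ → ℝ} {w : ℕ → E} {l : ℝ}
    (hc : Tendsto c atTop (𝓝 l)) (hl : -2 < l) (hw : Tendsto w atTop (𝓝 0)) :
    Tendsto (fun k => recurrenceEnergy (c k) (w k) (w (k + 1)) / (2 + c k)) atTop (𝓝 0) := by
  have hw' := hw.comp (tendsto_add_atTop_nat 1)
  have hnum : Tendsto (fun k => recurrenceEnergy (c k) (w k) (w (k + 1))) atTop (𝓝 0) := by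
    simpa [recurrenceEnergy] using
      ((hw.norm.pow 2).add (hw'.norm.pow 2)).sub (hc.mul (hw.inner hw'))
  simpa [Pi.div_def] using hnum.div (hc.const_add 2) (by linarith)

lemma eq_zero_of_forall_ge_of_recurrence {c : ℕ → ℝ} {w : ℕ → E} {N : ℕ}
    (hrec : ∀ k, w k + w (k + 2) = c k • w (k + 1)) (hN : ∀ k ≥ N, w k = 0) : w = 0 := by
  induction N with
  | zero => exact funext fun k => hN k k.zero_le
  | succ N ih =>
    refine ih fun k hk => ?_
    simpa [hN (k + 1) (by omega), hN (k + 2) (by omega)] using hrec k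

/-- The ratios `recurrenceEnergy (c k) (w k) (w (k + 1)) / (2 + c k)` increase to their
limit `0`. -/
lemma eq_zero_of_oscillatory_recurrence {c : ℕ → ℝ} {w : ℕ → E} {l : ℝ} (hc : Antitone c)
    (hlim : Tendsto c atTop (𝓝 l)) (hl : |l| < 2)
    (hrec : ∀ k, w k + w (k + 2) = c k • w (k + 1)) (hw : Tendsto w atTop (𝓝 0)) : w = 0 := by
  have hlo : ∀ k, -2 < c k := fun k => (abs_lt.1 hl).1.trans_le (hc.le_of_tendsto hlim k)
  have hmono : Monotone fun k => recurrenceEnergy (c k) (w k) (w (k + 1)) / (2 + c k) :=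
    monotone_nat_of_le_succ fun k => by
      rw [← recurrenceEnergy_eq_of_add_eq_smul (hrec k)]
      exact recurrenceEnergy_div_le (hlo _) (hc k.le_succ) _ _
  obtain ⟨N, hN⟩ := eventually_atTop.1 (hlim.eventually_lt_const (abs_lt.1 hl).2)
  refine eq_zero_of_forall_ge_of_recurrence hrec fun k hk =>
    eq_zero_of_recurrenceEnergy_nonpos (v := w (k + 1)) (hlo k) (hN k hk) ?_
  have := hmono.ge_of_tendsto (tendsto_recurrenceEnergy_div hlim (abs_lt.1 hl).1 hw) k
  simpa using (div_le_iff₀ (by linarith [hlo k])).1 this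

lemma norm_sq_le_inner_of_hyperbolic_recurrence {c : ℕ → ℝ} {w : ℕ → E} (hc : ∀ k, 2 ≤ c k)
    (hrec : ∀ k, w k + w (k + 2) = c k • w (k + 1)) (hw : Tendsto w atTop (𝓝 0)) :
    ‖w 1‖ ^ 2 ≤ ⟪w 0, w 1⟫_ℝ := by
  have hanti : Antitone fun k => ⟪w k - w (k + 1), w (k + 1)⟫_ℝ := by
    refine antitone_nat_of_succ_le fun k => ?_
    have hdiff : ⟪w k - w (k + 1), w (k + 1)⟫_ℝ - ⟪w (k + 1) - w (k + 2), w (k + 2)⟫_ℝ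
        = (c k - 2) * ‖w (k + 1)‖ ^ 2 + ‖w (k + 1) - w (k + 2)‖ ^ 2 := by
      rw [eq_sub_of_add_eq (hrec k), norm_sub_sq_real]
      simp only [inner_sub_left, real_inner_smul_left, real_inner_self_eq_norm_sq,
        real_inner_comm (w (k + 2)) (w (k + 1))]
      ring
    have := mul_nonneg (sub_nonneg.2 (hc k)) (sq_nonneg ‖w (k + 1)‖)
    linarith [sq_nonneg ‖w (k + 1) - w (k + 2)‖]
  have hw' := hw.comp (tendsto_add_atTop_nat 1)
  have hlim : Tendsto (fun k => ⟪w k - w (k + 1), w (k + 1)⟫_ℝ) atTop (𝓝 0) := by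
    simpa using (hw.sub hw').inner (𝕜 := ℝ) hw'
  simpa [inner_sub_left] using hanti.le_of_tendsto hlim 0

lemma inner_sub_inner_of_dissipative_recurrence {c : ℕ → ℝ} {w : ℕ → E}
    (hrec : ∀ k, w k - w (k + 2) = c k • w (k + 1)) (k : ℕ) :
    ⟪w k, w (k + 1)⟫_ℝ - ⟪w (k + 1), w (k + 2)⟫_ℝ = c k * ‖w (k + 1)‖ ^ 2 := by
  rw [eq_add_of_sub_eq (hrec k)]
  simp [inner_add_left, real_inner_smul_left, real_inner_comm (w (k + 2)) (w (k + 1))]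

lemma inner_succ_nonneg_of_dissipative_recurrence {c : ℕ → ℝ} {w : ℕ → E} (hc : ∀ k, 0 < c k)
    (hrec : ∀ k, w k - w (k + 2) = c k • w (k + 1)) (hw : Tendsto w atTop (𝓝 0)) (k : ℕ) :
    0 ≤ ⟪w k, w (k + 1)⟫_ℝ := by
  have hanti : Antitone fun k => ⟪w k, w (k + 1)⟫_ℝ := antitone_nat_of_succ_le fun k => by
    have := mul_nonneg (hc k).le (sq_nonneg ‖w (k + 1)‖)
    linarith [inner_sub_inner_of_dissipative_recurrence hrec k]
  have hlim : Tendsto (fun k => ⟪w k, w (k + 1)⟫_ℝ) atTop (𝓝 0) := by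
    simpa using hw.inner (𝕜 := ℝ) (hw.comp (tendsto_add_atTop_nat 1))
  exact hanti.le_of_tendsto hlim k

lemma succ_ne_zero_of_dissipative_recurrence {c : ℕ → ℝ} {w : ℕ → E} (hc : ∀ k, 0 < c k)
    (hrec : ∀ k, w k - w (k + 2) = c k • w (k + 1)) (hw : Tendsto w atTop (𝓝 0)) {k : ℕ}
    (hk : w k ≠ 0) : w (k + 1) ≠ 0 := by
  intro hzero
  have hwk : w k = w (k + 2) := by simpa [hzero, sub_eq_zero] using hrec k
  have hstep := inner_sub_inner_of_dissipative_recurrence hrec (k + 1)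
  rw [hzero, inner_zero_left, add_assoc, one_add_one_eq_two, ← hwk] at hstep
  have hpos : 0 < c (k + 1) * ‖w k‖ ^ 2 := mul_pos (hc _) (by positivity)
  have := inner_succ_nonneg_of_dissipative_recurrence hc hrec hw (k + 2)
  rw [← hwk] at this
  linarith

lemma mul_inner_succ_lt_of_dissipative_recurrence {c : ℕ → ℝ} {w : ℕ → E} (hc : ∀ k, 0 < c k)
    (hrec : ∀ k, w k - w (k + 2) = c k • w (k + 1)) (hw : Tendsto w atTop (𝓝 0)) {k : ℕ}
    (hk : w k ≠ 0) : c k * ⟪w k, w (k + 1)⟫_ℝ < ‖w k‖ ^ 2 := by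
  have hne : w (k + 2) ≠ 0 := succ_ne_zero_of_dissipative_recurrence hc hrec hw
    (succ_ne_zero_of_dissipative_recurrence hc hrec hw hk)
  have hdiff : ‖w k‖ ^ 2 - c k * ⟪w k, w (k + 1)⟫_ℝ
      = c k * ⟪w (k + 1), w (k + 2)⟫_ℝ + ‖w (k + 2)‖ ^ 2 := by
    rw [eq_add_of_sub_eq (hrec k), norm_add_sq_real]
    simp only [inner_add_left, real_inner_smul_left, real_inner_self_eq_norm_sq, norm_smul,
      mul_pow, Real.norm_eq_abs, sq_abs, real_inner_comm (w (k + 2)) (w (k + 1))]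
    ring
  have := mul_nonneg (hc k).le (inner_succ_nonneg_of_dissipative_recurrence hc hrec hw (k + 1))
  linarith [pow_pos (norm_pos_iff.2 hne) 2]

lemma lt_mul_inner_succ_of_dissipative_recurrence {c : ℕ → ℝ} {w : ℕ → E} (hc : ∀ k, 0 < c k)
    (hrec : ∀ k, w k - w (k + 2) = c k • w (k + 1)) (hw : Tendsto w atTop (𝓝 0)) {k : ℕ}
    (hk : w k ≠ 0) :
    c (k + 1) * ‖w k‖ ^ 2 < (1 + c k * c (k + 1)) * ⟪w k, w (k + 1)⟫_ℝ := by
  have hlt := mul_inner_succ_lt_of_dissipative_recurrence hc hrec hw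
    (succ_ne_zero_of_dissipative_recurrence hc hrec hw hk)
  have hnn := inner_succ_nonneg_of_dissipative_recurrence hc hrec hw (k + 2)
  have hdiff : (1 + c k * c (k + 1)) * ⟪w k, w (k + 1)⟫_ℝ - c (k + 1) * ‖w k‖ ^ 2
      = c k * (‖w (k + 1)‖ ^ 2 - c (k + 1) * ⟪w (k + 1), w (k + 2)⟫_ℝ)
        + ⟪w (k + 2), w (k + 3)⟫_ℝ := by
    have hstep := inner_sub_inner_of_dissipative_recurrence hrec (k + 1)
    rw [eq_add_of_sub_eq (hrec k), norm_add_sq_real]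
    simp only [inner_add_left, real_inner_smul_left, real_inner_self_eq_norm_sq, norm_smul,
      mul_pow, Real.norm_eq_abs, sq_abs, real_inner_comm (w (k + 2)) (w (k + 1)),
      add_assoc, Nat.reduceAdd] at hstep ⊢
    linear_combination hstep
  linarith [mul_pos (hc k) (sub_pos.2 hlt)]

end Recurrence

section TwoSidedRecurrence

variable {E : Type*} [NormedAddCommGroup E] {c : ℤ → ℝ} {v : ℤ → E}

lemma tendsto_natCast_of_tendsto_cofinite {X : Type*} {l : Filter X} {f : ℤ → X}
    (hf : Tendsto f cofinite l) : Tendsto (fun k : ℕ => f k) atTop l := by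
  rw [← Nat.cofinite_eq_atTop]
  exact hf.comp Nat.cast_injective.tendsto_cofinite

variable [InnerProductSpace ℝ E]

lemma eq_zero_natCast_of_oscillatory_recurrence {l : ℝ} (hc : AntitoneOn c (Set.Ioi 0))
    (hlim : Tendsto c atTop (𝓝 l)) (hl : |l| < 2)
    (hrec : ∀ n ≠ 0, v (n - 1) + v (n + 1) = c n • v n) (hv : Tendsto v cofinite (𝓝 0)) (k : ℕ) :
    v k = 0 := by
  refine congrFun (eq_zero_of_oscillatory_recurrence (c := fun k => c (k + 1)) (l := l)
    (w := fun k : ℕ => v k) (fun i j hij => ?_) ?_ hl (fun k => ?_)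
    (tendsto_natCast_of_tendsto_cofinite hv)) k
  · exact hc (Set.mem_Ioi.2 (by omega)) (Set.mem_Ioi.2 (by omega)) (by omega)
  · exact hlim.comp (tendsto_atTop_add_const_right _ 1 tendsto_natCast_atTop_atTop)
  · simpa [add_assoc] using hrec (k + 1) (by omega)

lemma eq_zero_of_two_sided_oscillatory_recurrence {l : ℝ} (heven : ∀ n, c (-n) = c n)
    (hc : AntitoneOn c (Set.Ioi 0)) (hlim : Tendsto c atTop (𝓝 l)) (hl : |l| < 2)
    (hrec : ∀ n ≠ 0, v (n - 1) + v (n + 1) = c n • v n) (hv : Tendsto v cofinite (𝓝 0)) :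
    v = 0 := by
  funext n
  obtain ⟨k, rfl | rfl⟩ := n.eq_nat_or_neg
  · exact eq_zero_natCast_of_oscillatory_recurrence hc hlim hl hrec hv k
  · refine eq_zero_natCast_of_oscillatory_recurrence (v := fun n => v (-n)) hc hlim hl
      (fun n hn => ?_) (hv.comp neg_injective.tendsto_cofinite) k
    rw [← heven, ← hrec (-n) (neg_ne_zero.2 hn), add_comm]
    congr 2 <;> ring

lemma eq_zero_of_two_sided_recurrence {c : ℤ → ℝ} (hrec : ∀ n, v (n - 1) + v (n + 1) = c n • v n)
    (h0 : v 0 = 0) (h1 : v 1 = 0) : v = 0 := by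
  have hpair : ∀ n : ℤ, v n = 0 ∧ v (n + 1) = 0 := fun n => by
    induction n with
    | zero => exact ⟨h0, by simpa using h1⟩
    | succ k ih => exact ⟨ih.2, by simpa [ih.1, ih.2] using hrec (k + 1)⟩
    | pred k ih => exact ⟨by simpa [ih.1, ih.2] using hrec (-k), by simpa using ih.1⟩
  exact funext fun n => (hpair n).1

lemma norm_sq_one_le_inner_of_hyperbolic_recurrence (hc : ∀ n ≠ 0, 2 ≤ c n)
    (hrec : ∀ n ≠ 0, v (n - 1) + v (n + 1) = c n • v n) (hv : Tendsto v cofinite (𝓝 0)) :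
    ‖v 1‖ ^ 2 ≤ ⟪v 0, v 1⟫_ℝ := by
  simpa using norm_sq_le_inner_of_hyperbolic_recurrence (c := fun k => c (k + 1))
    (w := fun k : ℕ => v k) (fun k => hc _ (by omega))
    (fun k => by simpa [add_assoc] using hrec (k + 1) (by omega))
    (tendsto_natCast_of_tendsto_cofinite hv)

lemma eq_zero_of_two_sided_hyperbolic_recurrence (hc0 : c 0 < 0) (hc : ∀ n ≠ 0, 2 ≤ c n)
    (hrec : ∀ n, v (n - 1) + v (n + 1) = c n • v n) (hv : Tendsto v cofinite (𝓝 0)) : v = 0 := by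
  have hright := norm_sq_one_le_inner_of_hyperbolic_recurrence hc (fun n _ => hrec n) hv
  have hleft : ‖v (-1)‖ ^ 2 ≤ ⟪v 0, v (-1)⟫_ℝ :=
    norm_sq_one_le_inner_of_hyperbolic_recurrence (c := fun n => c (-n)) (v := fun n => v (-n))
      (fun n hn => hc _ (neg_ne_zero.2 hn))
      (fun n _ => by rw [← hrec (-n), add_comm]; congr 2 <;> ring)
      (hv.comp neg_injective.tendsto_cofinite)
  have hmid : ⟪v 0, v (-1)⟫_ℝ + ⟪v 0, v 1⟫_ℝ = c 0 * ‖v 0‖ ^ 2 := by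
    rw [← inner_add_right, show v (-1) + v 1 = c 0 • v 0 by simpa using hrec 0,
      real_inner_smul_right, real_inner_self_eq_norm_sq]
  have h0 : v 0 = 0 := by
    by_contra hne
    have : c 0 * ‖v 0‖ ^ 2 < 0 := mul_neg_of_neg_of_pos hc0 (by positivity)
    linarith [sq_nonneg ‖v 1‖, sq_nonneg ‖v (-1)‖]
  have h1 : ‖v 1‖ ^ 2 ≤ 0 := by simpa only [h0, inner_zero_left] using hright
  exact eq_zero_of_two_sided_recurrence hrec h0 (by simpa using h1.antisymm (sq_nonneg _))

lemma inner_one_bounds_of_dissipative_recurrence (hc : ∀ n ≠ 0, 0 < c n)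
    (hrec : ∀ n ≠ 0, v (n - 1) - v (n + 1) = c n • v n) (hv : Tendsto v cofinite (𝓝 0))
    (h0 : v 0 ≠ 0) : c 1 * ⟪v 0, v 1⟫_ℝ < ‖v 0‖ ^ 2 ∧
      c 2 * ‖v 0‖ ^ 2 < (1 + c 1 * c 2) * ⟪v 0, v 1⟫_ℝ := by
  have hpos : ∀ k : ℕ, 0 < c (k + 1) := fun k => hc _ (by omega)
  have hrec' : ∀ k : ℕ, v k - v ((k + 2 : ℕ) : ℤ) = c (k + 1) • v ((k + 1 : ℕ) : ℤ) := fun k => by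
    simpa [add_assoc] using hrec (k + 1) (by omega)
  have hlim := tendsto_natCast_of_tendsto_cofinite hv
  exact ⟨by simpa using mul_inner_succ_lt_of_dissipative_recurrence (k := 0) hpos hrec' hlim h0,
    by simpa using lt_mul_inner_succ_of_dissipative_recurrence (k := 0) hpos hrec' hlim h0⟩

lemma alternate_reflect_recurrence (heven : ∀ n, c (-n) = c n) {n : ℤ}
    (hrec : v (-n - 1) - v (-n + 1) = c (-n) • v (-n)) :
    (-1 : ℝ) ^ (n - 1) • v (-(n - 1)) - (-1 : ℝ) ^ (n + 1) • v (-(n + 1))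
      = c n • (-1 : ℝ) ^ n • v (-n) := by
  rw [smul_comm (c n), ← heven, ← hrec, zpow_sub_one₀ (by norm_num), zpow_add_one₀ (by norm_num),
    show -(n - 1) = -n + 1 by ring, show -(n + 1) = -n - 1 by ring, inv_neg_one]
  module

lemma bounds_of_two_sided_dissipative_recurrence (heven : ∀ n, c (-n) = c n)
    (hc : ∀ n ≠ 0, 0 < c n) (hrec : ∀ n, v (n - 1) - v (n + 1) = c n • v n)
    (hv : Tendsto v cofinite (𝓝 0)) (h0 : v 0 ≠ 0) :
    -c 0 * c 1 < 2 ∧ 2 * c 2 < -c 0 * (1 + c 1 * c 2) := by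
  have hlim : Tendsto (fun n => (-1 : ℝ) ^ n • v (-n)) cofinite (𝓝 0) := by
    rw [tendsto_zero_iff_norm_tendsto_zero] at hv ⊢
    simpa only [norm_smul, norm_zpow, norm_neg, norm_one, one_zpow, one_mul,
      Function.comp_def] using
      hv.comp neg_injective.tendsto_cofinite
  have hright := inner_one_bounds_of_dissipative_recurrence hc (fun n _ => hrec n) hv h0
  have hleft := inner_one_bounds_of_dissipative_recurrence hc
    (fun n _ => alternate_reflect_recurrence heven (hrec (-n))) hlim (by simpa using h0)
  have hmid : ⟪v 0, v 1⟫_ℝ - ⟪v 0, v (-1)⟫_ℝ = -c 0 * ‖v 0‖ ^ 2 := by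
    rw [← inner_sub_right, ← neg_sub, show v (-1) - v 1 = c 0 • v 0 by simpa using hrec 0,
      inner_neg_right, real_inner_smul_right, real_inner_self_eq_norm_sq, neg_mul]
  simp only [zpow_zero, zpow_one, neg_zero, one_smul, neg_smul, inner_neg_right] at hleft
  have hsq : 0 < ‖v 0‖ ^ 2 := by positivity
  constructor <;> refine lt_of_mul_lt_mul_right ?_ hsq.le
  · linear_combination hright.1 + hleft.1 - c 1 * hmid
  · linear_combination hright.2 + hleft.2 + (1 + c 1 * c 2) * hmid

end TwoSidedRecurrence

section Algebra

lemma mul_add_mul_one_sub_mul_inv {R : Type*} [Ring R] {p : R} (hp : IsIdempotentElem p)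
    {u v : Rˣ} (hu : Commute (u : R) p) (hv : Commute (v : R) p) :
    (u * p + v * (1 - p)) * (u⁻¹ * p + v⁻¹ * (1 - p)) = 1 := by
  have hu' : (u : R) * p * (u⁻¹ * p) = p := by
    rw [hu.eq, mul_assoc, Units.mul_inv_cancel_left, hp.eq]
  have hv' : (v : R) * (1 - p) * (v⁻¹ * (1 - p)) = 1 - p := by
    rw [((Commute.one_right _).sub_right hv).eq, mul_assoc, Units.mul_inv_cancel_left,
      hp.one_sub.eq]
  have huv : (u : R) * p * (v⁻¹ * (1 - p)) = 0 := by
    rw [← mul_assoc, mul_assoc (u : R), ← (hv.units_inv_left).eq, mul_assoc, mul_assoc,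
      hp.mul_one_sub_self, mul_zero, mul_zero]
  have hvu : (v : R) * (1 - p) * (u⁻¹ * p) = 0 := by
    rw [(hu.units_inv_left).eq, ← mul_assoc, mul_assoc (v : R), hp.one_sub_mul_self, mul_zero,
      zero_mul]
  rw [add_mul, mul_add, mul_add, hu', hv', huv, hvu]
  abel

lemma mem_spectrum_of_mem_spectrum_mul_idempotent {𝕜 A : Type*} [Field 𝕜] [Ring A] [Algebra 𝕜 A]
    {t p : A} (hp : IsIdempotentElem p) (hc : Commute t p) {z : 𝕜} (hz : z ≠ 0)
    (h : z ∈ spectrum 𝕜 (t * p)) : z ∈ spectrum 𝕜 t := by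
  contrapose! h
  rw [spectrum.notMem_iff] at h ⊢
  obtain ⟨u, hu⟩ := h
  obtain ⟨v, hv⟩ := (IsUnit.mk0 z hz).map (algebraMap 𝕜 A)
  have hup : Commute (u : A) p := hu ▸ (Algebra.commute_algebraMap_left z p).sub_left hc
  have hvp : Commute (v : A) p := hv ▸ Algebra.commute_algebraMap_left z p
  have hsplit : algebraMap 𝕜 A z - t * p = u * p + v * (1 - p) := by
    rw [hu, hv]
    noncomm_ring
  have hinv := mul_add_mul_one_sub_mul_inv hp hup.units_inv_left hvp.units_inv_left
  rw [hsplit]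
  exact isUnit_iff_exists.2
    ⟨_, mul_add_mul_one_sub_mul_inv hp hup hvp, by simpa only [inv_inv] using hinv⟩

lemma exists_sq_eq_of_mem_spectrum_sq {𝕜 A : Type*} [Field 𝕜] [IsAlgClosed 𝕜] [Ring A]
    [Algebra 𝕜 A] {t : A} {z : 𝕜} (h : z ∈ spectrum 𝕜 (t ^ 2)) : ∃ w ∈ spectrum 𝕜 t, w ^ 2 = z := by
  simpa using (spectrum.map_pow_of_pos t two_pos).le h

lemma re_eq_zero_of_mem_spectrum_skewAdjoint {A : Type*} [CStarAlgebra A] {s : A}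
    (hs : s ∈ skewAdjoint A) {z : ℂ} (hz : z ∈ spectrum ℂ s) : z.re = 0 := by
  have hI : IsSelfAdjoint (Complex.I • s) := Complex.isSelfAdjoint_I_smul_iff_mem_skewAdjoint.2 hs
  have hmem : Complex.I • z ∈ spectrum ℂ (Complex.I • s) := by
    simpa using (spectrum.smul_mem_smul_iff (r := Units.mk0 Complex.I Complex.I_ne_zero)).2 hz
  simpa using congrArg Complex.im (hI.mem_spectrum_eq_re hmem)

variable {A : Type*} [CStarAlgebra A] [PartialOrder A] [StarOrderedRing A]

lemma re_eq_zero_of_mem_spectrum_skewAdjoint_mul {s p : A} (hs : s ∈ skewAdjoint A) (hp : 0 ≤ p)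
    {z : ℂ} (hz : z ∈ spectrum ℂ (s * p)) : z.re = 0 := by
  rcases eq_or_ne z 0 with rfl | hz0
  · rfl
  have hskew : CFC.sqrt p * (s * CFC.sqrt p) ∈ skewAdjoint A := by
    simpa [(CFC.sqrt_nonneg p).isSelfAdjoint.star_eq, mul_assoc] using
      skewAdjoint.conjugate hs (CFC.sqrt p)
  refine re_eq_zero_of_mem_spectrum_skewAdjoint hskew (z := z) ?_
  have hmem : z ∈ spectrum ℂ (s * CFC.sqrt p * CFC.sqrt p) \ {0} := by
    rw [mul_assoc, CFC.sqrt_mul_sqrt_self p hp]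
    exact ⟨hz, hz0⟩
  rw [spectrum.nonzero_mul_comm] at hmem
  exact hmem.1

lemma exists_neg_mem_spectrum_mul {x q : A} (hx : IsSelfAdjoint x) (hq : 0 ≤ q)
    (hqxq : ¬ 0 ≤ q * x * q) : ∃ r : ℝ, r < 0 ∧ (r : ℂ) ∈ spectrum ℂ (x * q) := by
  set d := CFC.sqrt q
  have hd : IsSelfAdjoint d := (CFC.sqrt_nonneg q).isSelfAdjoint
  have hdd : d * d = q := CFC.sqrt_mul_sqrt_self q hq
  have hdxd : ¬ 0 ≤ d * x * d := fun h => hqxq <| by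
    simpa only [← hdd, mul_assoc] using hd.conjugate_nonneg h
  have hsa : IsSelfAdjoint (d * x * d) := by
    simpa only [hd.star_eq] using hx.conjugate d
  rw [StarOrderedRing.nonneg_iff_spectrum_nonneg (R := ℝ) _ hsa] at hdxd
  push Not at hdxd
  obtain ⟨r, hr, hr0⟩ := hdxd
  refine ⟨r, hr0, ?_⟩
  have hmem : (r : ℂ) ∈ spectrum ℂ (d * (x * d)) \ {0} := by
    rw [← mul_assoc]
    exact ⟨(spectrum.algebraMap_mem_iff ℂ).2 hr, by simpa using hr0.ne⟩
  rw [spectrum.nonzero_mul_comm, mul_assoc, hdd] at hmem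
  exact hmem.1

end Algebra

section SequenceSpace

variable {ι : Type*}

lemma tendsto_cofinite_zero_of_lp_two (x : ℓ²(ι, ℂ)) : Tendsto x cofinite (𝓝 0) := by
  have h : Summable fun i => ‖x i‖ ^ 2 := by simpa using (lp.memℓp x).summable (by norm_num)
  rw [tendsto_zero_iff_norm_tendsto_zero]
  simpa using h.tendsto_cofinite_zero.sqrt

/-- The operator on `ℓ²` multiplying the `i`-th entry of a sequence by the real number `a i`. -/
noncomputable def diagonalOp (a : ℓ^∞(ι, ℝ)) : ℓ²(ι, ℂ) →L[ℂ] ℓ²(ι, ℂ) :=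
  lp.mapCLM 2 (fun i => (a i : ℂ) • .id ℂ ℂ) (norm_nonneg a) fun i => by
    simpa [norm_smul] using lp.norm_apply_le_norm ENNReal.top_ne_zero a i

@[simp]
lemma diagonalOp_apply (a : ℓ^∞(ι, ℝ)) (x : ℓ²(ι, ℂ)) (i : ι) :
    diagonalOp a x i = a i * x i := rfl

lemma norm_diagonalOp_le (a : ℓ^∞(ι, ℝ)) : ‖diagonalOp a‖ ≤ ‖a‖ :=
  lp.norm_mapCLM_le 2 _ (norm_nonneg a) _

lemma isSymmetric_diagonalOp (a : ℓ^∞(ι, ℝ)) :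
    (diagonalOp a : ℓ²(ι, ℂ) →ₗ[ℂ] ℓ²(ι, ℂ)).IsSymmetric := fun x y => by
  simp only [ContinuousLinearMap.coe_coe, lp.inner_eq_tsum, diagonalOp_apply, RCLike.inner_apply,
    map_mul, Complex.conj_ofReal]
  exact tsum_congr fun i => by ring

lemma isSelfAdjoint_diagonalOp (a : ℓ^∞(ι, ℝ)) : IsSelfAdjoint (diagonalOp a) :=
  ContinuousLinearMap.isSelfAdjoint_iff_isSymmetric.2 (isSymmetric_diagonalOp a)

lemma hasSum_re_inner_diagonalOp (a : ℓ^∞(ι, ℝ)) (x : ℓ²(ι, ℂ)) :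
    HasSum (fun i => a i * ‖x i‖ ^ 2) (⟪diagonalOp a x, x⟫_ℂ).re := by
  convert Complex.hasSum_re (lp.hasSum_inner (𝕜 := ℂ) (diagonalOp a x) x) using 2 with i
  rw [diagonalOp_apply, RCLike.inner_apply, map_mul, Complex.conj_ofReal, mul_left_comm,
    Complex.mul_conj']
  norm_cast

lemma diagonalOp_nonneg {a : ℓ^∞(ι, ℝ)} (ha : ∀ i, 0 ≤ a i) : 0 ≤ diagonalOp a := by
  rw [ContinuousLinearMap.nonneg_iff_isPositive, ContinuousLinearMap.isPositive_def']
  refine ⟨isSelfAdjoint_diagonalOp a, fun x => ?_⟩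
  exact (hasSum_re_inner_diagonalOp a x).nonneg fun i => mul_nonneg (ha i) (sq_nonneg _)

/-- The bounded sequence agreeing with `a` on `s` and vanishing off `s`. -/
noncomputable def restrictTo (s : Set ι) (a : ℓ^∞(ι, ℝ)) : ℓ^∞(ι, ℝ) :=
  ⟨s.indicator a, (lp.memℓp a).mono' fun _ => norm_indicator_le_norm_self _ _⟩

lemma restrictTo_apply (s : Set ι) (a : ℓ^∞(ι, ℝ)) (i : ι) :
    restrictTo s a i = s.indicator a i := rfl

/-- The isometry `x ↦ x ∘ σ` of `ℓ²` induced by a permutation `σ` of the index set. -/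
noncomputable def permuteOp (σ : Equiv.Perm ι) : ℓ²(ι, ℂ) →ₗᵢ[ℂ] ℓ²(ι, ℂ) where
  toFun x := ⟨x ∘ σ, memℓp_gen <|
    σ.summable_iff.2 ((lp.memℓp x).summable (by norm_num))⟩
  map_add' _ _ := rfl
  map_smul' _ _ := rfl
  norm_map' x := by
    rw [lp.norm_eq_tsum_rpow (by norm_num), lp.norm_eq_tsum_rpow (by norm_num)]
    congr 1
    exact σ.tsum_eq fun i => ‖x i‖ ^ (2 : ℝ≥0∞).toReal

@[simp]
lemma permuteOp_apply (σ : Equiv.Perm ι) (x : ℓ²(ι, ℂ)) (i : ι) : permuteOp σ x i = x (σ i) := rfl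

lemma inner_permuteOp_left (σ : Equiv.Perm ι) (x y : ℓ²(ι, ℂ)) :
    ⟪permuteOp σ x, y⟫_ℂ = ⟪x, permuteOp σ.symm y⟫_ℂ := by
  rw [lp.inner_eq_tsum, lp.inner_eq_tsum, ← σ.tsum_eq fun i => ⟪x i, permuteOp σ.symm y i⟫_ℂ]
  simp

/-- The operator `(S x) n = x (n - 1) - x (n + 1)` on `ℓ²(ℤ)`. -/
noncomputable def skewShift : ℓ²(ℤ, ℂ) →L[ℂ] ℓ²(ℤ, ℂ) :=
  (permuteOp (Equiv.subRight 1)).toContinuousLinearMap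
    - (permuteOp (Equiv.addRight 1)).toContinuousLinearMap

@[simp]
lemma skewShift_apply (x : ℓ²(ℤ, ℂ)) (n : ℤ) : skewShift x n = x (n - 1) - x (n + 1) := rfl

lemma norm_skewShift_le : ‖skewShift‖ ≤ 2 := by
  refine (norm_sub_le _ _).trans ?_
  linarith [LinearIsometry.norm_toContinuousLinearMap_le (permuteOp (Equiv.subRight (1 : ℤ))),
    LinearIsometry.norm_toContinuousLinearMap_le (permuteOp (Equiv.addRight (1 : ℤ)))]

lemma inner_skewShift_left (x y : ℓ²(ℤ, ℂ)) : ⟪skewShift x, y⟫_ℂ = -⟪x, skewShift y⟫_ℂ := by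
  have hr : (Equiv.subRight (1 : ℤ)).symm = Equiv.addRight 1 := rfl
  have hl : (Equiv.addRight (1 : ℤ)).symm = Equiv.subRight 1 := rfl
  simp only [skewShift, sub_apply, LinearIsometry.coe_toContinuousLinearMap,
    inner_sub_left, inner_sub_right, inner_permuteOp_left, hr, hl, neg_sub]

lemma skewShift_mem_skewAdjoint : skewShift ∈ skewAdjoint (ℓ²(ℤ, ℂ) →L[ℂ] ℓ²(ℤ, ℂ)) := by
  rw [skewAdjoint.mem_iff, ContinuousLinearMap.star_eq_adjoint]
  exact ((ContinuousLinearMap.eq_adjoint_iff _ _).2 fun x y => by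
    simp [inner_skewShift_left]).symm

end SequenceSpace

section RankOne

variable {𝕜 E : Type*} [NontriviallyNormedField 𝕜] [NormedAddCommGroup E] [NormedSpace 𝕜 E]

lemma mem_spectrum_of_eigenvector {T : E →L[𝕜] E} {z : 𝕜} {x : E} (hx : x ≠ 0)
    (h : T x = z • x) : z ∈ spectrum 𝕜 T := by
  intro hu
  have hbij := (Module.End.isUnit_iff _).1 (hu.map ContinuousLinearMap.toLinearMapRingHom)
  exact hx (hbij.1 (by simp [h, Algebra.algebraMap_eq_smul_one]))

variable [CompleteSpace E]

lemma isUnit_add_smulRight_of_injective {M : E →L[𝕜] E} (hM : IsUnit M) {φ : E →L[𝕜] 𝕜} {y : E}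
    (hinj : ∀ x, (M + φ.smulRight y) x = 0 → x = 0) : IsUnit (M + φ.smulRight y) := by
  rw [ContinuousLinearMap.isUnit_iff_bijective] at hM ⊢
  refine ⟨(injective_iff_map_eq_zero _).2 hinj, fun z => ?_⟩
  obtain ⟨w, hw⟩ := hM.2 y
  obtain ⟨r, hr⟩ := hM.2 z
  have hφ : 1 + φ w ≠ 0 := by
    intro h
    have hφw : φ w = -1 := by linear_combination h
    have hw0 : w = 0 := hinj w (by simp [hw, hφw])
    simp [hw0] at h
  obtain ⟨c, hc⟩ : ∃ c, φ r = c * (1 + φ w) := ⟨φ r / (1 + φ w), by field_simp⟩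
  refine ⟨r - c • w, ?_⟩
  simp only [add_apply, ContinuousLinearMap.smulRight_apply, map_sub, map_smul, hw, hr, hc]
  module

lemma exists_eigenvector_of_mem_spectrum_add_smulRight {M : E →L[𝕜] E} {φ : E →L[𝕜] 𝕜} {y : E}
    {z : 𝕜} (hz : z ∈ spectrum 𝕜 (M + φ.smulRight y)) (hM : z ∉ spectrum 𝕜 M) :
    ∃ x ≠ 0, (M + φ.smulRight y) x = z • x := by
  by_contra! hno
  refine spectrum.mem_iff.1 hz ?_
  have hsplit : algebraMap 𝕜 (E →L[𝕜] E) z - (M + φ.smulRight y)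
      = (algebraMap 𝕜 (E →L[𝕜] E) z - M) + (-φ).smulRight y := by
    ext x
    simp only [Algebra.algebraMap_eq_smul_one, sub_apply, smul_apply, one_apply_eq_self,
      add_apply, ContinuousLinearMap.smulRight_apply, neg_apply, neg_smul]
    abel
  rw [hsplit]
  refine isUnit_add_smulRight_of_injective (spectrum.notMem_iff.1 hM) fun x hx => ?_
  by_contra hx0
  refine hno x hx0 (sub_eq_zero.1 ?_)
  rw [← hsplit, ← neg_eq_zero] at hx
  simpa [Algebra.algebraMap_eq_smul_one] using hx

end RankOne

lemma inner_eq_zero_of_skew_eigenvectors {E : Type*} [NormedAddCommGroup E]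
    [InnerProductSpace ℂ E] {S A : E → E} (hS : ∀ x y, ⟪S x, y⟫_ℂ = -⟪x, S y⟫_ℂ)
    (hA : ∀ x y, ⟪A x, y⟫_ℂ = ⟪x, A y⟫_ℂ) {z w : ℂ} {x y : E} (hx : S (A x) = z • x)
    (hy : S (A y) = w • y) (hzw : z.re + w.re ≠ 0) : ⟪A x, y⟫_ℂ = 0 := by
  have h := hS (A x) (A y)
  rw [hx, hy, inner_smul_left, inner_smul_right, ← hA] at h
  have hmul : (starRingEnd ℂ z + w) * ⟪A x, y⟫_ℂ = 0 := by linear_combination h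
  refine (mul_eq_zero.1 hmul).resolve_left fun h0 => hzw ?_
  simpa using congrArg Complex.re h0

section Localization

lemma spectrum_skewShift_mul_diagonalOp_subset {a : ℓ^∞(ℤ, ℝ)} (ha : ∀ n, 0 ≤ a n) {z : ℂ}
    (hz : z ∈ spectrum ℂ (skewShift * diagonalOp a)) : z.re = 0 ∧ |z.im| ≤ 2 * ‖a‖ := by
  refine ⟨re_eq_zero_of_mem_spectrum_skewAdjoint_mul skewShift_mem_skewAdjoint
    (diagonalOp_nonneg ha) hz, (Complex.abs_im_le_norm z).trans ?_⟩
  calc ‖z‖ ≤ ‖skewShift * diagonalOp a‖ * ‖(1 : ℓ²(ℤ, ℂ) →L[ℂ] ℓ²(ℤ, ℂ))‖ :=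
        spectrum.norm_le_norm_mul_of_mem hz
    _ ≤ ‖skewShift * diagonalOp a‖ := mul_le_of_le_one_right (norm_nonneg _)
        ContinuousLinearMap.norm_id_le
    _ ≤ 2 * ‖a‖ := (norm_mul_le _ _).trans <| mul_le_mul norm_skewShift_le
        (norm_diagonalOp_le a) (norm_nonneg _) zero_le_two

lemma diagonalOp_eq_add_smulRight {ι : Type*} [DecidableEq ι] (a : ℓ^∞(ι, ℝ)) (i : ι) :
    diagonalOp a = diagonalOp (restrictTo {i}ᶜ a)
      + (lp.evalCLM ℂ (fun _ : ι => ℂ) 2 i).smulRight (lp.single 2 i (a i : ℂ)) := by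
  ext x j
  change (a j : ℂ) * x j =
    (restrictTo {i}ᶜ a j : ℂ) * x j + x i * (lp.single 2 i (a i : ℂ) : ℓ²(ι, ℂ)) j
  rcases eq_or_ne j i with rfl | hj
  · simp [restrictTo_apply, mul_comm]
  · simp [restrictTo_apply, hj]

lemma exists_eigenvector_of_mem_spectrum_skewShift_mul {a : ℓ^∞(ℤ, ℝ)} {b : ℝ} {i : ℤ}
    (ha : ∀ n ≠ i, 0 ≤ a n) (hab : ∀ n ≠ i, a n ≤ b) {z : ℂ}
    (hz : z ∈ spectrum ℂ (skewShift * diagonalOp a)) (hzb : ¬ (z.re = 0 ∧ |z.im| ≤ 2 * b)) :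
    ∃ x ≠ 0, (skewShift * diagonalOp a) x = z • x := by
  have hb : 0 ≤ b := (ha _ (lt_add_one i).ne').trans (hab _ (lt_add_one i).ne')
  have hnn : ∀ n, 0 ≤ restrictTo {i}ᶜ a n := fun n => Set.indicator_nonneg ha n
  have hnorm : ‖restrictTo {i}ᶜ a‖ ≤ b := lp.norm_le_of_forall_le hb fun n => by
    rw [Real.norm_of_nonneg (hnn n)]
    exact Set.indicator_apply_le' (hab n) fun _ => hb
  have hsplit : skewShift * diagonalOp a = skewShift * diagonalOp (restrictTo {i}ᶜ a)
      + (lp.evalCLM ℂ (fun _ : ℤ => ℂ) 2 i).smulRight (skewShift (lp.single 2 i (a i : ℂ))) := by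
    rw [diagonalOp_eq_add_smulRight a i, mul_add]
    congr 1
    ext1 x
    simp
  rw [hsplit] at hz ⊢
  refine exists_eigenvector_of_mem_spectrum_add_smulRight hz fun hmem => hzb ?_
  obtain ⟨hre, him⟩ := spectrum_skewShift_mul_diagonalOp_subset hnn hmem
  exact ⟨hre, him.trans (by gcongr)⟩

lemma eq_zero_of_isotropic {ι : Type*} {a : ℓ^∞(ι, ℝ)} {i : ι} (ha : ∀ j ≠ i, 0 < a j)
    {x : ℓ²(ι, ℂ)} (hxi : x i = 0) (hx : ⟪diagonalOp a x, x⟫_ℂ = 0) : x = 0 := by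
  have hsum := hasSum_re_inner_diagonalOp a x
  rw [hx, Complex.zero_re] at hsum
  have hnn : ∀ j, 0 ≤ a j * ‖x j‖ ^ 2 := fun j => by
    rcases eq_or_ne j i with rfl | hj
    · simp [hxi]
    · exact mul_nonneg (ha j hj).le (sq_nonneg _)
  have hzero := (hasSum_zero_iff_of_nonneg hnn).1 hsum
  ext j
  rcases eq_or_ne j i with rfl | hj
  · exact hxi
  · simpa [(ha j hj).ne'] using congrFun hzero j

lemma apply_ne_zero_of_eigenvector {a : ℓ^∞(ℤ, ℝ)} {i : ℤ} (ha : ∀ j ≠ i, 0 < a j) {z : ℂ}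
    (hz : z.re ≠ 0) {x : ℓ²(ℤ, ℂ)} (hx0 : x ≠ 0)
    (hx : (skewShift * diagonalOp a) x = z • x) : x i ≠ 0 := fun hxi =>
  hx0 <| eq_zero_of_isotropic ha hxi <| inner_eq_zero_of_skew_eigenvectors inner_skewShift_left
    (isSymmetric_diagonalOp a) hx hx (by simpa [← two_mul] using hz)

lemma eigenvalue_unique_of_re_pos {a : ℓ^∞(ℤ, ℝ)} {i : ℤ} (ha : ∀ j ≠ i, 0 < a j) {z w : ℂ}
    (hz : 0 < z.re) (hw : 0 < w.re) {x y : ℓ²(ℤ, ℂ)} (hx0 : x ≠ 0) (hy0 : y ≠ 0)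
    (hx : (skewShift * diagonalOp a) x = z • x) (hy : (skewShift * diagonalOp a) y = w • y) :
    z = w := by
  have horth : ∀ {z w : ℂ} {x y : ℓ²(ℤ, ℂ)}, 0 < z.re → 0 < w.re →
      (skewShift * diagonalOp a) x = z • x → (skewShift * diagonalOp a) y = w • y →
      ⟪diagonalOp a x, y⟫_ℂ = 0 := fun hz hw hx hy =>
    inner_eq_zero_of_skew_eigenvectors inner_skewShift_left (isSymmetric_diagonalOp a) hx hy
      (add_pos hz hw).ne'
  have hdep : y i • x = x i • y := by
    refine sub_eq_zero.1 (eq_zero_of_isotropic ha ?_ ?_)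
    · exact sub_eq_zero.2 (mul_comm (y i) (x i))
    · simp [horth hz hz hx hx, horth hw hw hy hy, horth hz hw hx hy, horth hw hz hy hx]
  have hyx : y i • x ≠ 0 := smul_ne_zero (apply_ne_zero_of_eigenvector ha hw.ne' hy0 hy) hx0
  refine smul_left_injective ℂ hyx ?_
  calc z • y i • x = (skewShift * diagonalOp a) (y i • x) := by rw [map_smul, hx, smul_comm]
    _ = w • y i • x := by rw [hdep, map_smul, hy, smul_comm]

end Localization

section Existence

/-- The operator `(J x) n = (-1) ^ n * x n` on `ℓ²(ℤ)`, which anticommutes with `skewShift`. -/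
noncomputable def parityOp : ℓ²(ℤ, ℂ) →L[ℂ] ℓ²(ℤ, ℂ) :=
  diagonalOp ⟨fun n => ((n.negOnePow : ℤ) : ℝ), memℓp_infty ⟨1, by
    rintro _ ⟨n, rfl⟩
    rcases Int.even_or_odd n with hn | hn <;> simp [Int.negOnePow_even, Int.negOnePow_odd, hn]⟩⟩

lemma parityOp_apply (x : ℓ²(ℤ, ℂ)) (n : ℤ) : parityOp x n = (n.negOnePow : ℤ) * x n := by
  simp [parityOp]

lemma parityOp_injective : Function.Injective parityOp := fun x y h => by
  ext n
  have hn := congrArg (fun z : ℓ²(ℤ, ℂ) => z n) h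
  simpa [parityOp_apply] using hn

lemma skewShift_mul_diagonalOp_parityOp (a : ℓ^∞(ℤ, ℝ)) (x : ℓ²(ℤ, ℂ)) :
    (skewShift * diagonalOp a) (parityOp x) = -parityOp ((skewShift * diagonalOp a) x) := by
  ext n
  change (a (n - 1) : ℂ) * parityOp x (n - 1) - a (n + 1) * parityOp x (n + 1)
    = -parityOp ((skewShift * diagonalOp a) x) n
  simp only [parityOp_apply, Int.negOnePow_sub, Int.negOnePow_one, mul_neg, mul_one,
    Units.val_neg, Int.cast_neg, Int.negOnePow_add, neg_mul, sub_neg_eq_add,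
    mul_apply_eq_comp, skewShift_apply, diagonalOp_apply]
  ring

lemma exists_eigenvector_neg {a : ℓ^∞(ℤ, ℝ)} {z : ℂ} {x : ℓ²(ℤ, ℂ)} (hx0 : x ≠ 0)
    (hx : (skewShift * diagonalOp a) x = z • x) :
    ∃ y ≠ 0, (skewShift * diagonalOp a) y = (-z) • y :=
  ⟨parityOp x, fun h => hx0 (parityOp_injective (h.trans (map_zero _).symm)), by
    rw [skewShift_mul_diagonalOp_parityOp, hx, map_smul, neg_smul]⟩

/-- The coordinate projection of `ℓ²(ℤ)` onto the odd indices. -/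
noncomputable def oddProj : ℓ²(ℤ, ℂ) →L[ℂ] ℓ²(ℤ, ℂ) := diagonalOp (restrictTo {n | Odd n} 1)

lemma oddProj_apply (x : ℓ²(ℤ, ℂ)) (n : ℤ) : oddProj x n = if Odd n then x n else 0 := by
  by_cases hn : Odd n <;> simp [oddProj, restrictTo_apply, hn]

lemma isIdempotentElem_oddProj : IsIdempotentElem oddProj := by
  ext x n
  by_cases hn : Odd n <;> simp [oddProj_apply, hn]

lemma diagonalOp_mul_oddProj (a : ℓ^∞(ℤ, ℝ)) :
    diagonalOp a * oddProj = diagonalOp (restrictTo {n | Odd n} a) := by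
  ext x n
  by_cases hn : Odd n <;> simp [oddProj_apply, restrictTo_apply, hn]

lemma oddProj_mul_skewShift_mul_diagonalOp (a : ℓ^∞(ℤ, ℝ)) :
    oddProj * (skewShift * diagonalOp a) = skewShift * diagonalOp a * (1 - oddProj) := by
  ext x n
  change oddProj ((skewShift * diagonalOp a) x) n = a (n - 1) * (x (n - 1) - oddProj x (n - 1))
    - a (n + 1) * (x (n + 1) - oddProj x (n + 1))
  rcases Int.even_or_odd n with hn | hn
  · simp [oddProj_apply, Int.not_odd_iff_even.2 hn, hn.sub_odd, hn.add_odd]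
  · simp only [oddProj_apply, hn, if_true, Int.not_odd_iff_even.2 (hn.sub_odd odd_one),
      Int.not_odd_iff_even.2 (hn.add_odd odd_one), if_false, sub_zero]
    rfl

lemma commute_sq_oddProj (a : ℓ^∞(ℤ, ℝ)) : Commute ((skewShift * diagonalOp a) ^ 2) oddProj := by
  have hswap := oddProj_mul_skewShift_mul_diagonalOp a
  generalize skewShift * diagonalOp a = L at hswap ⊢
  calc L ^ 2 * oddProj = L * (L - L * (1 - oddProj)) := by noncomm_ring
    _ = L * (L - oddProj * L) := by rw [hswap]
    _ = L * (1 - oddProj) * L := by noncomm_ring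
    _ = oddProj * L ^ 2 := by rw [sq, ← mul_assoc, hswap]

lemma diagonalOp_single {ι : Type*} [DecidableEq ι] (a : ℓ^∞(ι, ℝ)) (i : ι) (c : ℂ) :
    diagonalOp a (lp.single 2 i c) = (a i : ℂ) • lp.single 2 i c := by
  ext j
  change (a j : ℂ) * (lp.single 2 i c : ℓ²(ι, ℂ)) j = a i * (lp.single 2 i c : ℓ²(ι, ℂ)) j
  rcases eq_or_ne j i with rfl | hj
  · rfl
  · simp [hj]

lemma single_zero_mem_closure_range {a : ℓ^∞(ℤ, ℝ)} (ha : ∀ n, Odd n → a n ≠ 0) :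
    (lp.single 2 0 1 : ℓ²(ℤ, ℂ)) ∈
      closure (Set.range (skewShift * diagonalOp (restrictTo {n | Odd n} a))) := by
  set T := skewShift * diagonalOp (restrictTo {n | Odd n} a)
  suffices lp.single 2 0 1 ∈ (T : ℓ²(ℤ, ℂ) →ₗ[ℂ] ℓ²(ℤ, ℂ)).rangeᗮᗮ by
    rw [Submodule.orthogonal_orthogonal_eq_closure] at this
    exact this
  intro z hz
  have hstep : ∀ n, Odd n → z (n - 1) = z (n + 1) := fun n hn => by
    have hort : ⟪skewShift (diagonalOp (restrictTo {n | Odd n} a) (lp.single 2 n 1)), z⟫_ℂ = 0 :=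
      hz _ ⟨lp.single 2 n 1, rfl⟩
    rw [inner_skewShift_left, diagonalOp_single, inner_smul_left, lp.inner_single_left] at hort
    simpa [restrictTo_apply, hn, ha n hn, sub_eq_zero] using hort
  have hconst : ∀ k : ℕ, z (2 * k : ℕ) = z 0 := fun k => by
    induction k with
    | zero => rfl
    | succ k ih =>
      rw [← ih]
      convert (hstep (2 * k + 1) ⟨k, rfl⟩).symm using 2 <;> push_cast <;> ring
  have hlim : Tendsto (fun k : ℕ => z (2 * k : ℕ)) atTop (𝓝 0) := by
    rw [← Nat.cofinite_eq_atTop]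
    exact (tendsto_cofinite_zero_of_lp_two z).comp
      (show Function.Injective fun k : ℕ => ((2 * k : ℕ) : ℤ) from
        fun j k h => by simpa using h).tendsto_cofinite
  rw [funext hconst] at hlim
  simp [lp.inner_single_right, tendsto_nhds_unique tendsto_const_nhds hlim]

lemma not_nonneg_conj_skewShift {a : ℓ^∞(ℤ, ℝ)} (ha0 : a 0 < 0) (ha : ∀ n, Odd n → 0 < a n) :
    ¬ 0 ≤ diagonalOp (restrictTo {n | Odd n} a) * (-(skewShift * diagonalOp a * skewShift))
      * diagonalOp (restrictTo {n | Odd n} a) := by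
  set Q := diagonalOp (restrictTo {n | Odd n} a)
  intro hnn
  have hclosed : IsClosed {y : ℓ²(ℤ, ℂ) | 0 ≤ (⟪diagonalOp a y, y⟫_ℂ).re} :=
    isClosed_le continuous_const (by fun_prop)
  have hrange : Set.range (skewShift * Q) ⊆ {y | 0 ≤ (⟪diagonalOp a y, y⟫_ℂ).re} := by
    rintro _ ⟨x, rfl⟩
    have hx := ((ContinuousLinearMap.nonneg_iff_isPositive _).1 hnn).re_inner_nonneg_left x
    have hinner : ⟪(Q * -(skewShift * diagonalOp a * skewShift) * Q) x, x⟫_ℂ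
        = ⟪diagonalOp a ((skewShift * Q) x), (skewShift * Q) x⟫_ℂ :=
      calc _ = -⟪Q (skewShift (diagonalOp a (skewShift (Q x)))), x⟫_ℂ := by simp
        _ = -⟪skewShift (diagonalOp a (skewShift (Q x))), Q x⟫_ℂ :=
          congrArg _ (isSymmetric_diagonalOp _ _ _)
        _ = _ := by
          rw [inner_skewShift_left, neg_neg]
          rfl
    rwa [hinner] at hx
  have hmem := closure_minimal hrange hclosed <|
    single_zero_mem_closure_range fun n hn => (ha n hn).ne'
  have hge : 0 ≤ a 0 := by
    simpa [diagonalOp_single, inner_smul_left, lp.inner_single_left] using hmem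
  exact ha0.not_ge hge

lemma exists_real_mem_spectrum_skewShift_mul {a : ℓ^∞(ℤ, ℝ)} (ha0 : a 0 < 0)
    (ha : ∀ n, Odd n → 0 < a n) :
    ∃ l : ℝ, l ≠ 0 ∧ (l : ℂ) ∈ spectrum ℂ (skewShift * diagonalOp a) := by
  have hsa : IsSelfAdjoint (-(skewShift * diagonalOp a * skewShift)) := by
    have h := (isSelfAdjoint_diagonalOp a).conjugate skewShift
    rwa [skewAdjoint.mem_iff.1 skewShift_mem_skewAdjoint, mul_neg] at h
  have hodd : 0 ≤ diagonalOp (restrictTo {n | Odd n} a) :=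
    diagonalOp_nonneg fun n => Set.indicator_nonneg (fun n hn => (ha n hn).le) n
  obtain ⟨r, hr, hmem⟩ := exists_neg_mem_spectrum_mul hsa hodd (not_nonneg_conj_skewShift ha0 ha)
  have hsq : -(skewShift * diagonalOp a * skewShift) * diagonalOp (restrictTo {n | Odd n} a)
      = -((skewShift * diagonalOp a) ^ 2 * oddProj) := by
    rw [← diagonalOp_mul_oddProj]
    noncomm_ring
  rw [hsq, ← spectrum.neg_eq, Set.mem_neg] at hmem
  obtain ⟨w, hw, hwr⟩ := exists_sq_eq_of_mem_spectrum_sq <|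
    mem_spectrum_of_mem_spectrum_mul_idempotent isIdempotentElem_oddProj (commute_sq_oddProj a)
      (by simpa using hr.ne) hmem
  have hroot : w ^ 2 = ((√(-r) : ℝ) : ℂ) ^ 2 := by
    rw [hwr, ← Complex.ofReal_pow, Real.sq_sqrt (by linarith), Complex.ofReal_neg]
  have hne : √(-r) ≠ 0 := (Real.sqrt_pos.2 (by linarith)).ne'
  rcases sq_eq_sq_iff_eq_or_eq_neg.1 hroot with rfl | rfl
  · exact ⟨√(-r), hne, hw⟩
  · exact ⟨-√(-r), neg_ne_zero.2 hne, by simpa using hw⟩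

end Existence

section SingleWell

/-- A single well of height `b`: an even sequence, negative only at `0`, that increases to `b` on
the positive integers. These are the properties of the line coefficients `A_n` that determine the
spectral picture. -/
structure IsSingleWell (a : ℤ → ℝ) (b : ℝ) : Prop where
  even : ∀ n, a (-n) = a n
  neg : a 0 < 0
  pos : ∀ n ≠ 0, 0 < a n
  mono : MonotoneOn a (Set.Ioi 0)
  tendsto : Tendsto a atTop (𝓝 b)

namespace IsSingleWell

variable {a : ℤ → ℝ} {b s : ℝ}

lemma ne_zero (h : IsSingleWell a b) (n : ℤ) : a n ≠ 0 := by
  rcases eq_or_ne n 0 with rfl | hn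
  exacts [h.neg.ne, (h.pos n hn).ne']

lemma le (h : IsSingleWell a b) {n : ℤ} (hn : n ≠ 0) : a n ≤ b := by
  have hpos : ∀ m > 0, a m ≤ b := fun m hm =>
    ge_of_tendsto h.tendsto <| (eventually_ge_atTop m).mono fun k hk =>
      h.mono hm (hm.trans_le hk) hk
  rcases hn.lt_or_gt with hn | hn
  · exact h.even n ▸ hpos (-n) (neg_pos.2 hn)
  · exact hpos n hn

lemma height_pos (h : IsSingleWell a b) : 0 < b :=
  (h.pos 1 one_ne_zero).trans_le (h.le one_ne_zero)

lemma antitoneOn_div (h : IsSingleWell a b) (hs : 0 ≤ s) :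
    AntitoneOn (fun n => s / a n) (Set.Ioi 0) := fun m hm _ hn hmn =>
  div_le_div_of_nonneg_left hs (h.pos m (Set.mem_Ioi.1 hm).ne') (h.mono hm hn hmn)

end IsSingleWell

variable {a : ℓ^∞(ℤ, ℝ)} {b s : ℝ} {ζ z : ℂ} {x : ℓ²(ℤ, ℂ)}

lemma rotate_recurrence (hζ : ζ ^ 2 = -1) {n : ℤ} (ha : a n ≠ 0)
    (hx : (skewShift * diagonalOp a) x n = s * ζ * x n) :
    ζ ^ (n - 1) * diagonalOp a x (n - 1) + ζ ^ (n + 1) * diagonalOp a x (n + 1)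
      = (s / a n) • (ζ ^ n * diagonalOp a x n) := by
  have hζ0 : ζ ≠ 0 := by
    rintro rfl
    norm_num at hζ
  have ha' : (a n : ℂ) ≠ 0 := Complex.ofReal_ne_zero.2 ha
  have hinv : ζ⁻¹ = -ζ := inv_eq_of_mul_eq_one_right (by linear_combination -hζ)
  change diagonalOp a x (n - 1) - diagonalOp a x (n + 1) = _ at hx
  rw [zpow_sub_one₀ hζ0, zpow_add_one₀ hζ0, hinv, Complex.real_smul, diagonalOp_apply a x n]
  push_cast
  field_simp
  linear_combination -ζ * hx - s * x n * hζ

lemma tendsto_rotate (hζ : ζ ^ 2 = -1) (y : ℓ²(ℤ, ℂ)) :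
    Tendsto (fun n => ζ ^ n * y n) cofinite (𝓝 0) := by
  have hnorm : ‖ζ‖ = 1 := Complex.norm_eq_one_of_pow_eq_one (n := 4)
    (by linear_combination (ζ ^ 2 - 1) * hζ) (by norm_num)
  have hy := tendsto_cofinite_zero_of_lp_two y
  rw [tendsto_zero_iff_norm_tendsto_zero] at hy ⊢
  simpa only [norm_mul, norm_zpow, hnorm, one_zpow, one_mul] using hy

lemma eq_zero_of_rotate_eq_zero (hζ : ζ ^ 2 = -1) (ha : ∀ n, a n ≠ 0)
    (hx : (fun n => ζ ^ n * diagonalOp a x n) = 0) : x = 0 := by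
  ext n
  have hζ0 : ζ ≠ 0 := by
    rintro rfl
    norm_num at hζ
  simpa [zpow_ne_zero n hζ0, ha n] using congrFun hx n

lemma exists_sq_eq_neg_one_of_re_eq_zero (hz : z.re = 0) :
    ∃ ζ : ℂ, ζ ^ 2 = -1 ∧ z = |z.im| * ζ := by
  rcases abs_cases z.im with ⟨him, -⟩ | ⟨him, -⟩
  · exact ⟨Complex.I, Complex.I_sq, Complex.ext (by simp [hz]) (by simp [him])⟩
  · exact ⟨-Complex.I, by simp, Complex.ext (by simp [hz]) (by simp [him])⟩

lemma IsSingleWell.eq_zero_of_oscillatory (h : IsSingleWell a b) (hζ : ζ ^ 2 = -1) (hs0 : 0 ≤ s)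
    (hs : s < 2 * b) (hx : ∀ n ≠ 0, (skewShift * diagonalOp a) x n = s * ζ * x n) : x = 0 := by
  refine eq_zero_of_rotate_eq_zero hζ h.ne_zero ?_
  refine eq_zero_of_two_sided_oscillatory_recurrence (c := fun n => s / a n)
    (fun n => by rw [h.even]) (h.antitoneOn_div hs0)
    (tendsto_const_nhds.div h.tendsto h.height_pos.ne') ?_
    (fun n hn => rotate_recurrence hζ (h.ne_zero n) (hx n hn)) (tendsto_rotate hζ _)
  rwa [abs_of_nonneg (div_nonneg hs0 h.height_pos.le), div_lt_iff₀ h.height_pos]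

lemma IsSingleWell.eq_zero_of_hyperbolic (h : IsSingleWell a b) (hζ : ζ ^ 2 = -1)
    (hs : 2 * b ≤ s) (hx : ∀ n, (skewShift * diagonalOp a) x n = s * ζ * x n) : x = 0 := by
  have hs0 : 0 < s := (mul_pos two_pos h.height_pos).trans_le hs
  refine eq_zero_of_rotate_eq_zero hζ h.ne_zero ?_
  refine eq_zero_of_two_sided_hyperbolic_recurrence (c := fun n => s / a n)
    (div_neg_of_pos_of_neg hs0 h.neg) (fun n hn => ?_)
    (fun n => rotate_recurrence hζ (h.ne_zero n) (hx n)) (tendsto_rotate hζ _)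
  rw [le_div_iff₀ (h.pos n hn)]
  linarith [h.le hn]

lemma IsSingleWell.eq_zero_of_re_eq_zero (h : IsSingleWell a b) (hz : z.re = 0)
    (hx : (skewShift * diagonalOp a) x = z • x) : x = 0 := by
  obtain ⟨ζ, hζ, hzζ⟩ := exists_sq_eq_neg_one_of_re_eq_zero hz
  have hcoord : ∀ n, (skewShift * diagonalOp a) x n = (|z.im| : ℝ) * ζ * x n := fun n => by
    rw [hx, ← hzζ]
    rfl
  rcases lt_or_ge |z.im| (2 * b) with hlt | hge
  · exact h.eq_zero_of_oscillatory hζ (abs_nonneg _) hlt fun n _ => hcoord n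
  · exact h.eq_zero_of_hyperbolic hζ hge hcoord

/-- The range of `s * ζ - skewShift * diagonalOp a` misses `lp.single 2 0 1`. -/
lemma IsSingleWell.mem_spectrum_of_lt (h : IsSingleWell a b) (hζ : ζ ^ 2 = -1) (hs0 : 0 ≤ s)
    (hs : s < 2 * b) : s * ζ ∈ spectrum ℂ (skewShift * diagonalOp a) := by
  intro hu
  obtain ⟨x, hx⟩ := (ContinuousLinearMap.isUnit_iff_bijective.1 hu).2 (lp.single 2 0 1)
  have hcoord : ∀ n, s * ζ * x n - (skewShift * diagonalOp a) x n
      = (lp.single 2 0 1 : ℓ²(ℤ, ℂ)) n := fun n => by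
    rw [← hx]
    rfl
  have hx0 : x = 0 := h.eq_zero_of_oscillatory hζ hs0 hs fun n hn => by
    exact (sub_eq_zero.1 ((hcoord n).trans (lp.single_apply_ne _ _ _ hn))).symm
  simpa [hx0] using hcoord 0

lemma IsSingleWell.mem_spectrum_of_le (h : IsSingleWell a b) (hz : z.re = 0)
    (hzb : |z.im| ≤ 2 * b) : z ∈ spectrum ℂ (skewShift * diagonalOp a) := by
  obtain ⟨ζ, hζ, hzζ⟩ := exists_sq_eq_neg_one_of_re_eq_zero hz
  have hclosed : IsClosed {s : ℝ | (s : ℂ) * ζ ∈ spectrum ℂ (skewShift * diagonalOp a)} :=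
    (spectrum.isClosed _).preimage (by fun_prop)
  have hsub : Set.Ico 0 (2 * b) ⊆ {s : ℝ | (s : ℂ) * ζ ∈ spectrum ℂ (skewShift * diagonalOp a)} :=
    fun s hs => h.mem_spectrum_of_lt hζ hs.1 hs.2
  have hcl := closure_minimal hsub hclosed
  rw [closure_Ico (mul_pos two_pos h.height_pos).ne] at hcl
  rw [hzζ]
  exact hcl ⟨abs_nonneg _, hzb⟩

lemma IsSingleWell.sq_eigenvalue_bounds (h : IsSingleWell a b) {l : ℝ} (hl : 0 < l) (hx0 : x ≠ 0)
    (hx : (skewShift * diagonalOp a) x = (l : ℂ) • x) :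
    (2 * -a 0 - a 2) * a 1 < l ^ 2 ∧ l ^ 2 < 2 * -a 0 * a 1 := by
  have hrec : ∀ n, diagonalOp a x (n - 1) - diagonalOp a x (n + 1)
      = (l / a n) • diagonalOp a x n := fun n => by
    have hn := congrArg (fun y : ℓ²(ℤ, ℂ) => y n) hx
    change diagonalOp a x (n - 1) - diagonalOp a x (n + 1) = l * x n at hn
    have hne : (a n : ℂ) ≠ 0 := Complex.ofReal_ne_zero.2 (h.ne_zero n)
    rw [hn, Complex.real_smul, diagonalOp_apply, Complex.ofReal_div]
    field_simp
  have hv0 : diagonalOp a x 0 ≠ 0 := mul_ne_zero (Complex.ofReal_ne_zero.2 h.neg.ne)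
    (apply_ne_zero_of_eigenvector h.pos (by simpa using hl.ne') hx0 hx)
  obtain ⟨hupper, hlower⟩ := bounds_of_two_sided_dissipative_recurrence (c := fun n => l / a n)
    (fun n => by rw [h.even]) (fun n hn => div_pos hl (h.pos n hn)) hrec
    (tendsto_cofinite_zero_of_lp_two _) hv0
  have h0 : 0 < -a 0 := neg_pos.2 h.neg
  have h1 := h.pos 1 one_ne_zero
  have h2 := h.pos 2 two_ne_zero
  rw [← div_neg] at hupper hlower
  generalize -(a 0 : ℝ) = d at *
  constructor
  · have hscale : 0 < d * a 1 * a 2 / l := by positivity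
    have := mul_lt_mul_of_pos_left hlower hscale
    field_simp at this
    linarith
  · rw [div_mul_div_comm, div_lt_iff₀ (by positivity)] at hupper
    linarith

lemma IsSingleWell.exists_pos_eigenvalue (h : IsSingleWell a b) :
    ∃ l : ℝ, 0 < l ∧ ∃ x ≠ 0, (skewShift * diagonalOp a) x = (l : ℂ) • x := by
  obtain ⟨l, hl, hmem⟩ := exists_real_mem_spectrum_skewShift_mul h.neg fun n hn =>
    h.pos n (by rintro rfl; simp at hn)
  obtain ⟨x, hx0, hx⟩ := exists_eigenvector_of_mem_spectrum_skewShift_mul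
    (fun n hn => (h.pos n hn).le) (fun n hn => h.le hn) hmem (by simp [hl])
  rcases hl.lt_or_gt with hneg | hpos
  · exact ⟨-l, neg_pos.2 hneg, by simpa using exists_eigenvector_neg hx0 hx⟩
  · exact ⟨l, hpos, x, hx0, hx⟩

lemma IsSingleWell.eigenvalue_iff (h : IsSingleWell a b) {l : ℝ} (hl : 0 < l)
    {y : ℓ²(ℤ, ℂ)} (hy0 : y ≠ 0) (hy : (skewShift * diagonalOp a) y = (l : ℂ) • y) :
    (∃ x ≠ 0, (skewShift * diagonalOp a) x = z • x) ↔ z = l ∨ z = -l := by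
  constructor
  · rintro ⟨x, hx0, hx⟩
    rcases lt_trichotomy z.re 0 with hneg | hzero | hpos
    · obtain ⟨w, hw0, hw⟩ := exists_eigenvector_neg hx0 hx
      exact .inr <| neg_eq_iff_eq_neg.1 <|
        eigenvalue_unique_of_re_pos h.pos (by simpa using hneg) (by simpa using hl) hw0 hy0 hw hy
    · exact absurd (h.eq_zero_of_re_eq_zero hzero hx) hx0
    · exact .inl <| eigenvalue_unique_of_re_pos h.pos hpos (by simpa using hl) hx0 hy0 hx hy
  · rintro (rfl | rfl)
    · exact ⟨y, hy0, hy⟩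
    · exact exists_eigenvector_neg hy0 hy

lemma IsSingleWell.spectrum_eq (h : IsSingleWell a b) {l : ℝ} (hl : 0 < l)
    {y : ℓ²(ℤ, ℂ)} (hy0 : y ≠ 0) (hy : (skewShift * diagonalOp a) y = (l : ℂ) • y) :
    spectrum ℂ (skewShift * diagonalOp a) =
      {(l : ℂ), -(l : ℂ)} ∪ {z | z.re = 0 ∧ |z.im| ≤ 2 * b} := by
  ext z
  rw [Set.mem_union, Set.mem_insert_iff, Set.mem_singleton_iff, ← h.eigenvalue_iff hl hy0 hy]
  constructor
  · intro hz
    by_contra! hno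
    obtain ⟨x, hx0, hx⟩ := exists_eigenvector_of_mem_spectrum_skewShift_mul
      (fun n hn => (h.pos n hn).le) (fun n hn => h.le hn) hz fun hzb => hno.2 hzb
    exact hno.1 x hx0 hx
  · rintro (⟨x, hx0, hx⟩ | ⟨hre, him⟩)
    · exact mem_spectrum_of_eigenvector hx0 hx
    · exact h.mem_spectrum_of_le hre him

end SingleWell

section EulerLine

variable {α : ℝ}

lemma coefA_line (α : ℝ) (n : ℤ) :
    coefA α (1, 0) (n, -1) = α / 2 * (1 - 1 / ((n : ℝ) ^ 2 + α ^ 2)) := by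
  simp only [coefA]
  push_cast
  ring

lemma tendsto_coefA_line (α : ℝ) :
    Tendsto (fun n : ℤ => coefA α (1, 0) (n, -1)) cofinite (𝓝 (α / 2)) := by
  have hsq : Tendsto (fun n : ℤ => ‖(n : ℝ)‖ ^ 2) cofinite atTop :=
    (tendsto_pow_atTop two_ne_zero).comp <|
      (tendsto_norm_cocompact_atTop (E := ℝ)).comp Int.tendsto_coe_cofinite
  have hinv := (tendsto_const_nhds (x := (1 : ℝ))).div_atTop
    (tendsto_atTop_add_const_right _ (α ^ 2) hsq)
  simpa [coefA_line] using (hinv.const_sub 1).const_mul (α / 2)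

lemma coefA_line_pos (h0 : 0 < α) {n : ℤ} (hn : n ≠ 0) : 0 < coefA α (1, 0) (n, -1) := by
  have hsq : (1 : ℝ) ≤ (n : ℝ) ^ 2 := by
    rw [one_le_sq_iff_one_le_abs]
    exact_mod_cast Int.one_le_abs hn
  rw [coefA_line]
  refine mul_pos (half_pos h0) (sub_pos.2 ?_)
  rw [div_lt_one (by positivity)]
  linarith [pow_pos h0 2]

lemma isSingleWell_coefA_line (h0 : 0 < α) (h1 : α < 1) :
    IsSingleWell (fun n => coefA α (1, 0) (n, -1)) (α / 2) where
  even n := by simp [coefA_line]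
  neg := by
    have hsq : 1 < 1 / α ^ 2 := (one_lt_div (by positivity)).2 (pow_lt_one₀ h0.le h1 two_ne_zero)
    simpa [coefA_line] using mul_neg_of_pos_of_neg (half_pos h0) (sub_neg.2 hsq)
  pos _ := coefA_line_pos h0
  mono m hm n _ hmn := by
    have hm' : (0 : ℝ) < m := Int.cast_pos.2 hm
    have hmn' : (m : ℝ) ≤ n := Int.cast_le.2 hmn
    simp only [coefA_line]
    gcongr
  tendsto := (tendsto_coefA_line α).mono_left atTop_le_cofinite

lemma memℓp_coefA_line (α : ℝ) :
    Memℓp (fun n : ℤ => coefA α (1, 0) (n, -1)) ∞ :=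
  memℓp_infty (tendsto_coefA_line α).norm.bddAbove_range_of_cofinite

/-- The coefficients `A_n` along the line through `k̂ = (0, -1)`, as a bounded sequence. -/
noncomputable def lineWeight (α : ℝ) : ℓ^∞(ℤ, ℝ) :=
  ⟨fun n => coefA α (1, 0) (n, -1), memℓp_coefA_line α⟩

lemma two_mul_neg_lineWeight_zero_mul_lineWeight_one (hα : α ≠ 0) :
    2 * -lineWeight α 0 * lineWeight α 1 = α ^ 2 * (1 - α ^ 2) / (2 * (α ^ 2 + 1)) := by
  simp only [lineWeight, coefA_line]
  push_cast
  field_simp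
  ring

lemma lineWeight_two_mul_lineWeight_one (α : ℝ) :
    lineWeight α 2 * lineWeight α 1
      = α ^ 4 * (α ^ 2 + 3) / (4 * (α ^ 2 + 1) * (α ^ 2 + 4)) := by
  simp only [lineWeight, coefA_line]
  push_cast
  field_simp
  ring

lemma setOf_re_eq_zero_and_abs_im_le (r : ℝ) :
    {z : ℂ | z.re = 0 ∧ |z.im| ≤ r} = {z | ∃ t : ℝ, |t| ≤ r ∧ z = t * Complex.I} := by
  ext z
  constructor
  · rintro ⟨hre, him⟩
    exact ⟨z.im, him, Complex.ext (by simpa using hre) (by simp)⟩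
  · rintro ⟨t, ht, rfl⟩
    simpa using ht

end EulerLine

theorem euler_line_zero_neg_one_spectrum_general
    (α : ℝ) (h0 : 0 < α) (h1 : α < 1)
    (L : lp (fun _ : ℤ => ℂ) 2 →L[ℂ] lp (fun _ : ℤ => ℂ) 2)
    (hL : ∀ (ω : lp (fun _ : ℤ => ℂ) 2) (n : ℤ),
      (L ω : ℤ → ℂ) n
        = (↑(coefA α (1, 0) (n - 1, -1)) : ℂ) * ω (n - 1)
          - (↑(coefA α (1, 0) (n + 1, -1)) : ℂ) * ω (n + 1)) :
    ∃ l0 : ℝ, 0 < l0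
      ∧ α ^ 2 * (1 - α ^ 2) / (2 * (α ^ 2 + 1))
          - α ^ 4 * (α ^ 2 + 3) / (4 * (α ^ 2 + 1) * (α ^ 2 + 4)) < l0 ^ 2
      ∧ l0 ^ 2 < α ^ 2 * (1 - α ^ 2) / (2 * (α ^ 2 + 1))
      ∧ (∀ lam : ℂ,
          (∃ ω : lp (fun _ : ℤ => ℂ) 2, ω ≠ 0 ∧ L ω = lam • ω)
            ↔ (lam = (l0 : ℂ) ∨ lam = -(l0 : ℂ)))
      ∧ spectrum ℂ L
          = {(l0 : ℂ), -(l0 : ℂ)}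
            ∪ {lam : ℂ | ∃ t : ℝ, |t| ≤ α ∧ lam = t * Complex.I} := by
  obtain rfl : L = skewShift * diagonalOp (lineWeight α) := by
    ext ω n
    exact hL ω n
  have hwell : IsSingleWell (lineWeight α) (α / 2) := isSingleWell_coefA_line h0 h1
  obtain ⟨l, hl, x, hx0, hx⟩ := hwell.exists_pos_eigenvalue
  obtain ⟨hlo, hhi⟩ := hwell.sq_eigenvalue_bounds hl hx0 hx
  rw [sub_mul, two_mul_neg_lineWeight_zero_mul_lineWeight_one h0.ne',
    lineWeight_two_mul_lineWeight_one] at hlo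
  rw [two_mul_neg_lineWeight_zero_mul_lineWeight_one h0.ne'] at hhi
  refine ⟨l, hl, hlo, hhi, fun _ => hwell.eigenvalue_iff hl hx0 hx, ?_⟩
  rw [hwell.spectrum_eq hl hx0 hx, setOf_re_eq_zero_and_abs_im_le, mul_div_cancel₀ α two_ne_zero]

/-- For the inviscid (linearized Euler) line-`k̂ = (0,−1)` operator
`(L₀ω)_n = A_{n−1}ω_{n−1} − A_{n+1}ω_{n+1}` on `ℓ²(ℤ;ℂ)` with
`α ∈ (0.5, 0.8469)`: there is `l0 > 0`, satisfying the stated bounds, such that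
`l0` and `−l0` are the only eigenvalues, and the spectrum equals
`{l0, −l0} ∪ [−iα, iα]` (the segment being continuous spectrum). -/
theorem euler_line_zero_neg_one_spectrum
    (α : ℝ) (hα : 0.5 < α ∧ α < 0.8469)
    (L : lp (fun _ : ℤ => ℂ) 2 →L[ℂ] lp (fun _ : ℤ => ℂ) 2)
    (hL : ∀ (ω : lp (fun _ : ℤ => ℂ) 2) (n : ℤ),
      (L ω : ℤ → ℂ) n
        = (↑(coefA α (1, 0) (n - 1, -1)) : ℂ) * ω (n - 1)
          - (↑(coefA α (1, 0) (n + 1, -1)) : ℂ) * ω (n + 1)) :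
    ∃ l0 : ℝ, 0 < l0
      ∧ Real.sqrt (α ^ 2 * (1 - α ^ 2) / (2 * (α ^ 2 + 1))
          - α ^ 4 * (α ^ 2 + 3) / (4 * (α ^ 2 + 1) * (α ^ 2 + 4))) < l0
      ∧ l0 < Real.sqrt (α ^ 2 * (1 - α ^ 2) / (2 * (α ^ 2 + 1)))
      ∧ (∀ lam : ℂ,
          (∃ ω : lp (fun _ : ℤ => ℂ) 2, ω ≠ 0 ∧ L ω = lam • ω)
            ↔ (lam = (l0 : ℂ) ∨ lam = -(l0 : ℂ)))
      ∧ spectrum ℂ L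
          = {(l0 : ℂ), -(l0 : ℂ)}
            ∪ {lam : ℂ | ∃ t : ℝ, |t| ≤ α ∧ lam = t * Complex.I} := by
  obtain ⟨l, hl, hlo, hhi, hspec⟩ := euler_line_zero_neg_one_spectrum_general α
    (by linarith [hα.1]) (by linarith [hα.2]) L hL
  exact ⟨l, hl, (Real.sqrt_lt' hl).2 hlo, (Real.lt_sqrt hl.le).2 hhi, hspec⟩
end
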